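/- arXiv:2307.06592 — 6 statements merged into one kernel-verified Lean document; each statement's English description precedes it below -/
import Mathlib

section
/- The subspace $A_0$ of torus-invariant polynomials equals the $k$-subalgebra of $A$ generated by the $n+3$ elements $t_0,\dots,t_n$, $u$, and $v$ (that is, by $x_0y_0,\dots,x_ny_n$, $x_0x_1\cdots x_n$, and $y_0y_1\cdots y_n$). -/
open MvPolynomial

noncomputable section

/-- The variables of `A = k[x₀,…,xₙ,y₀,…,yₙ]`: `Sum.inl i` is `xᵢ`, `Sum.inr i` is `yᵢ`. -/
abbrev Vars (n : ℕ) : Type := Fin (n + 1) ⊕ Fin (n + 1)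

/-- The `l`-th weight of a monomial `∏ xᵢ^{cᵢ} yᵢ^{dᵢ}`, for `l ∈ {1,…,n}` encoded as
`l : Fin n` (representing the index `l+1`): it is `c_{l-1} - c_l - d_{l-1} + d_l`. -/
def wt (n : ℕ) (σ : Vars n →₀ ℕ) (l : Fin n) : ℤ :=
  (σ (Sum.inl l.castSucc) : ℤ) - (σ (Sum.inl l.succ) : ℤ)
    - (σ (Sum.inr l.castSucc) : ℤ) + (σ (Sum.inr l.succ) : ℤ)

/-- The weight space `A_χ`: the set of polynomials all of whose monomials have `l`-th
weight `χ l` for every `l`. -/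
def wtSpace (k : Type) [Field k] (n : ℕ) (χ : Fin n → ℤ) : Set (MvPolynomial (Vars n) k) :=
  {p | ∀ σ ∈ p.support, ∀ l : Fin n, wt n σ l = χ l}

/-!
Both sides are spanned by monomials, so the claim is one about exponents. The weights of
`∏ xᵢ^{cᵢ} yᵢ^{dᵢ}` all vanish exactly when `cᵢ - dᵢ` is a constant, with positive part `a` and
negative part `b`, say; and then the monomial equals `u ^ a * v ^ b * ∏ tᵢ ^ min cᵢ dᵢ`.
-/

section MonomialAlgebra

variable {R σ : Type*} [CommSemiring R]

theorem toSubmodule_adjoin_monomial_one_image (s : Set (σ →₀ ℕ)) :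
    Subalgebra.toSubmodule (Algebra.adjoin R ((monomial · (1 : R)) '' s)) =
      restrictSupport R (AddSubmonoid.closure s : Set (σ →₀ ℕ)) := by
  have closure_image : Submonoid.closure ((monomial · (1 : R)) '' s) =
      (AddSubmonoid.closure s).toSubmonoid.map (monomialOneHom R σ) := by
    rw [AddSubmonoid.toSubmonoid_closure, MonoidHom.map_mclosure]
    rfl
  rw [Algebra.adjoin_eq_span, closure_image, restrictSupport_eq_span]
  rfl

end MonomialAlgebra

section Balanced

open Sum (inl inr)

/-- The exponents of the monomials `∏ xᵢ^{cᵢ} yᵢ^{dᵢ}` for which the integer `cᵢ - dᵢ` does not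
depend on `i`; for `ι = Fin (n + 1)` these are the torus-invariant monomials. -/
def balancedExponents (ι : Type*) : AddSubmonoid (ι ⊕ ι →₀ ℕ) where
  carrier := {σ | ∀ i j, (σ (inl i) : ℤ) - σ (inr i) = σ (inl j) - σ (inr j)}
  zero_mem' _ _ := rfl
  add_mem' {σ τ} hσ hτ i j := by
    have hσij := hσ i j
    have hτij := hτ i j
    simp only [Finsupp.add_apply]
    omega

/-- The exponents of the monomials `tᵢ = xᵢyᵢ`, `u = ∏ xᵢ` and `v = ∏ yᵢ`. -/
def generatorExponents (ι : Type*) [Fintype ι] : Set (ι ⊕ ι →₀ ℕ) :=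
  (Set.range fun i ↦ .single (inl i) 1 + .single (inr i) 1) ∪
    {∑ i, .single (inl i) 1, ∑ i, .single (inr i) 1}

variable {ι : Type*}

theorem mem_balancedExponents {σ : ι ⊕ ι →₀ ℕ} :
    σ ∈ balancedExponents ι ↔
      ∀ i j, (σ (inl i) : ℤ) - σ (inr i) = σ (inl j) - σ (inr j) :=
  Iff.rfl

theorem exists_eq_min_add_of_mem_balancedExponents {σ : ι ⊕ ι →₀ ℕ}
    (hσ : σ ∈ balancedExponents ι) :
    ∃ a b, ∀ i, σ (inl i) = min (σ (inl i)) (σ (inr i)) + a ∧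
      σ (inr i) = min (σ (inl i)) (σ (inr i)) + b := by
  rcases isEmpty_or_nonempty ι with _ | ⟨⟨i₀⟩⟩
  · exact ⟨0, 0, isEmptyElim⟩
  · -- With truncated subtraction, these are the positive and negative parts of `cᵢ - dᵢ`.
    refine ⟨σ (inl i₀) - σ (inr i₀), σ (inr i₀) - σ (inl i₀), fun i ↦ ?_⟩
    have hdiff := mem_balancedExponents.1 hσ i i₀
    omega

variable [Fintype ι]

theorem eq_sum_nsmul_of_forall_eq_add {σ : ι ⊕ ι →₀ ℕ} {m : ι → ℕ} {a b : ℕ}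
    (hx : ∀ i, σ (inl i) = m i + a) (hy : ∀ i, σ (inr i) = m i + b) :
    σ = ∑ i, m i • (.single (inl i) 1 + .single (inr i) 1) +
      a • ∑ i, .single (inl i) 1 + b • ∑ i, .single (inr i) 1 := by
  classical
  ext (i | i)
  · simp [hx, Finsupp.single_apply]
  · simp [hy, Finsupp.single_apply]

theorem generatorExponents_subset_balancedExponents :
    generatorExponents ι ⊆ balancedExponents ι := by
  classical
  rintro _ (⟨l, rfl⟩ | rfl | rfl) <;>
    simp [mem_balancedExponents, Finsupp.single_apply]

theorem balancedExponents_eq_closure :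
    balancedExponents ι = AddSubmonoid.closure (generatorExponents ι) := by
  refine le_antisymm (fun σ hσ ↦ ?_)
    (AddSubmonoid.closure_le.2 generatorExponents_subset_balancedExponents)
  obtain ⟨a, b, hab⟩ := exists_eq_min_add_of_mem_balancedExponents hσ
  rw [eq_sum_nsmul_of_forall_eq_add (fun i ↦ (hab i).1) (fun i ↦ (hab i).2)]
  have mem_closure {τ : ι ⊕ ι →₀ ℕ} (hτ : τ ∈ generatorExponents ι) (m : ℕ) :
      m • τ ∈ AddSubmonoid.closure (generatorExponents ι) :=
    nsmul_mem (AddSubmonoid.subset_closure hτ) m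
  exact add_mem (add_mem (sum_mem fun i _ ↦ mem_closure (.inl ⟨i, rfl⟩) _)
    (mem_closure (.inr (.inl rfl)) a)) (mem_closure (.inr (.inr rfl)) b)

theorem monomial_one_image_generatorExponents (R : Type*) [CommSemiring R] :
    (monomial · (1 : R)) '' generatorExponents ι =
      (Set.range fun i ↦ X (inl i) * X (inr i)) ∪ {∏ i, X (inl i), ∏ i, X (inr i)} := by
  simp only [generatorExponents, Set.image_union, ← Set.range_comp, Set.image_pair,
    monomial_sum_one, Function.comp_def, X, monomial_mul, mul_one]

theorem stmt0_general (R ι : Type*) [CommSemiring R] [Fintype ι] :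
    restrictSupport R (balancedExponents ι : Set (ι ⊕ ι →₀ ℕ)) =
      Subalgebra.toSubmodule (Algebra.adjoin R
        ((Set.range fun i ↦ X (inl i) * X (inr i)) ∪ {∏ i, X (inl i), ∏ i, X (inr i)})) := by
  rw [balancedExponents_eq_closure, ← toSubmodule_adjoin_monomial_one_image,
    monomial_one_image_generatorExponents]

end Balanced

theorem forall_wt_eq_zero_iff {n : ℕ} {σ : Vars n →₀ ℕ} :
    (∀ l, wt n σ l = 0) ↔ σ ∈ balancedExponents (Fin (n + 1)) := by
  refine ⟨fun h ↦ ?_, fun h l ↦ ?_⟩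
  · have eq_zeroth (i : Fin (n + 1)) :
        (σ (.inl i) : ℤ) - σ (.inr i) = σ (.inl 0) - σ (.inr 0) := by
      induction i using Fin.induction with
      | zero => rfl
      | succ l ih =>
        have hl := h l
        unfold wt at hl
        omega
    exact mem_balancedExponents.2 fun i j ↦ (eq_zeroth i).trans (eq_zeroth j).symm
  · have hl := mem_balancedExponents.1 h l.castSucc l.succ
    unfold wt
    omega

theorem wtSpace_zero_eq_restrictSupport (k : Type) [Field k] (n : ℕ) :
    wtSpace k n 0 = restrictSupport k (balancedExponents (Fin (n + 1)) : Set (Vars n →₀ ℕ)) :=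
  Set.ext fun _ ↦ forall₂_congr fun _ _ ↦ forall_wt_eq_zero_iff

/-- The torus-invariant subspace `A₀` equals the `k`-subalgebra of `A` generated by
`t₀ = x₀y₀, …, tₙ = xₙyₙ`, `u = x₀⋯xₙ` and `v = y₀⋯yₙ`. -/
theorem stmt0 (k : Type) [Field k] (n : ℕ) (hn : 1 ≤ n) :
    wtSpace k n 0 =
      ↑(Algebra.adjoin k
        ((Set.range fun i : Fin (n + 1) =>
            (X (Sum.inl i) * X (Sum.inr i) : MvPolynomial (Vars n) k)) ∪
          {∏ i, X (Sum.inl i), ∏ i, X (Sum.inr i)})) := by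
  rw [wtSpace_zero_eq_restrictSupport, stmt0_general, Subalgebra.coe_toSubmodule]
end
end

section
/- For each $i$ with $1 \le i \le n$, the weight space $A_{\chi_i}$ (where $\chi_i \in \mathbb{Z}^n$ is the $i$-th standard basis vector) is an $A_0$-submodule of $A$, and it is generated as an $A_0$-module by the two elements $\sigma_i = x_0x_1\cdots x_{i-1}$ and $\tau_i = y_iy_{i+1}\cdots y_n$; that is, $A_{\chi_i} = A_0\,\sigma_i + A_0\,\tau_i$. -/
open MvPolynomial

noncomputable section

/-- The standard basis vector `χ_{i+1} ∈ ℤⁿ`, for `i : Fin n` representing the paper's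
index `i+1 ∈ {1,…,n}`. -/
def chi (n : ℕ) (i : Fin n) : Fin n → ℤ := fun l => if l = i then 1 else 0

/-- `σ_{i+1} = x₀x₁⋯xᵢ` (the paper's `σ_m = x₀⋯x_{m-1}` for `m = i+1`). -/
def sigmaElt (k : Type) [Field k] (n : ℕ) (i : Fin n) : MvPolynomial (Vars n) k :=
  ∏ j ∈ Finset.univ.filter (fun j : Fin (n + 1) => (j : ℕ) < (i : ℕ) + 1), X (Sum.inl j)

/-- `τ_{i+1} = y_{i+1}⋯yₙ` (the paper's `τ_m = y_m⋯yₙ` for `m = i+1`). -/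
def tauElt (k : Type) [Field k] (n : ℕ) (i : Fin n) : MvPolynomial (Vars n) k :=
  ∏ j ∈ Finset.univ.filter (fun j : Fin (n + 1) => (i : ℕ) + 1 ≤ (j : ℕ)), X (Sum.inr j)

/-!
Write a monomial as `∏ xⱼ^{cⱼ} yⱼ^{dⱼ}` and put `fⱼ = cⱼ - dⱼ`. Its `l`-th weight is
`f_{l-1} - f_l`, so it has weight `χ_i` exactly when `f` takes a constant value `a` on `0, …, i-1` and the constant
value `a - 1` on `i, …, n`. If `a ≥ 1`, then `x₀⋯x_{i-1} = σ_i` divides the monomial; if `a ≤ 0`,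
then `y_i⋯yₙ = τ_i` does. In both cases the quotient has weight `0`.
-/

open Finsupp (weight)

attribute [local instance] WeightedHomogeneousSubmodule.gradedMonoid

section WeightedHomogeneous

variable {R σ M : Type*} [CommSemiring R] [AddCommMonoid M] {w : σ → M} {m : M}

lemma isWeightedHomogeneous_of_mem_span {S : Set (MvPolynomial σ R)}
    (hS : ∀ g ∈ S, IsWeightedHomogeneous w g m) {p : MvPolynomial σ R}
    (hp : p ∈ Submodule.span (weightedHomogeneousSubmodule R w 0) S) :
    IsWeightedHomogeneous w p m := by
  induction hp using Submodule.span_induction with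
  | mem g hg => exact hS g hg
  | zero => exact isWeightedHomogeneous_zero R w m
  | add p q _ _ hp hq => exact hp.add hq
  | smul a p _ hp => exact zero_add m ▸ IsWeightedHomogeneous.mul a.2 hp

lemma monomial_mem_span_monomial_of_le [IsCancelAdd M] {e s : σ →₀ ℕ}
    (h : weight w e = weight w s) (hle : e ≤ s) (c : R) :
    monomial s c ∈ Submodule.span (weightedHomogeneousSubmodule R w 0) {monomial e (1 : R)} := by
  have hsub : s - e + e = s := tsub_add_cancel_of_le hle
  have hweight : weight w (s - e) = 0 := by
    apply add_right_cancel (b := weight w e)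
    rw [← map_add, hsub, zero_add, h]
  refine Submodule.mem_span_singleton.mpr
    ⟨⟨monomial (s - e) c, isWeightedHomogeneous_monomial w _ c hweight⟩, ?_⟩
  rw [Algebra.smul_def, SetLike.GradeZero.algebraMap_apply, monomial_mul, hsub, mul_one]

theorem mem_span_monomial_iff_isWeightedHomogeneous [IsCancelAdd M] {E : Set (σ →₀ ℕ)}
    (hE : ∀ e ∈ E, weight w e = m) (hdvd : ∀ s, weight w s = m → ∃ e ∈ E, e ≤ s)
    {p : MvPolynomial σ R} :
    p ∈ Submodule.span (weightedHomogeneousSubmodule R w 0) ((monomial · (1 : R)) '' E) ↔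
      IsWeightedHomogeneous w p m := by
  refine ⟨isWeightedHomogeneous_of_mem_span ?_, fun hp => ?_⟩
  · rintro _ ⟨e, he, rfl⟩
    exact isWeightedHomogeneous_monomial w e 1 (hE e he)
  · rw [p.as_sum]
    refine Submodule.sum_mem _ fun s hs => ?_
    have hs : weight w s = m := hp (mem_support_iff.mp hs)
    obtain ⟨e, he, hle⟩ := hdvd s hs
    have hsingle : {monomial e (1 : R)} ⊆ (monomial · (1 : R)) '' E :=
      Set.singleton_subset_iff.mpr ⟨e, he, rfl⟩
    exact Submodule.span_mono hsingle
      (monomial_mem_span_monomial_of_le ((hE e he).trans hs.symm) hle _)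

end WeightedHomogeneous

section Squarefree

variable {σ : Type*} {S : Finset σ}

lemma monomial_indicator_one {R : Type*} [CommSemiring R] :
    monomial (Finsupp.indicator S fun _ _ => 1) (1 : R) = ∏ v ∈ S, X v := by
  rw [Finsupp.indicator_eq_sum_single S fun _ => 1, monomial_sum_one]
  rfl

lemma indicator_one_le_iff {s : σ →₀ ℕ} :
    Finsupp.indicator S (fun _ _ => 1) ≤ s ↔ ∀ v ∈ S, 1 ≤ s v := by
  classical
  refine forall_congr' fun v => ?_
  by_cases hv : v ∈ S <;> simp [hv]

end Squarefree

lemma eq_sub_ite_of_castSucc_sub_succ {G : Type*} [AddCommGroup G] {n : ℕ} {f : Fin (n + 1) → G}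
    {i : Fin n} {a : G} (hf : ∀ l : Fin n, f l.castSucc - f l.succ = if l = i then a else 0)
    (j : Fin (n + 1)) : f j = f 0 - if j ≤ i.castSucc then 0 else a := by
  induction j using Fin.induction with
  | zero => simp
  | succ l ih =>
    rw [← sub_sub_cancel (f l.castSucc) (f l.succ), hf, ih, sub_sub]
    congr 1
    simp only [Fin.ext_iff, Fin.le_def, Fin.val_castSucc, Fin.val_succ]
    grind

section Vars

variable {n : ℕ}

/-- The weight in `ℤⁿ` of each variable, so that `A_χ` is the space of weighted homogeneous
polynomials of weight `χ` in Mathlib's sense. -/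
def varWeight (n : ℕ) (v : Vars n) : Fin n → ℤ := wt n (Finsupp.single v 1)

lemma wt_zero : wt n 0 = 0 := by
  ext l
  simp [wt]

lemma wt_add (s t : Vars n →₀ ℕ) : wt n (s + t) = wt n s + wt n t := by
  ext l
  simp only [wt, Finsupp.add_apply, Pi.add_apply, Nat.cast_add]
  ring

lemma weight_varWeight (s : Vars n →₀ ℕ) : weight (varWeight n) s = wt n s := by
  let wtHom : (Vars n →₀ ℕ) →+ (Fin n → ℤ) := ⟨⟨wt n, wt_zero⟩, wt_add⟩
  suffices h : weight (varWeight n) = wtHom from DFunLike.congr_fun h s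
  ext v : 2
  simp [wtHom, varWeight, Finsupp.weight_single]

lemma mem_wtSpace_iff {k : Type} [Field k] {χ : Fin n → ℤ} {p : MvPolynomial (Vars n) k} :
    p ∈ wtSpace k n χ ↔ IsWeightedHomogeneous (varWeight n) p χ := by
  simp only [wtSpace, Set.mem_ofPred_eq, IsWeightedHomogeneous, weight_varWeight, funext_iff,
    mem_support_iff]

/-- The exponent vector of `σ_{i+1} = x₀⋯xᵢ`. -/
def sigmaExp (i : Fin n) : Vars n →₀ ℕ :=
  Finsupp.indicator (Finset.map .inl (Finset.Iic i.castSucc)) fun _ _ => 1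

/-- The exponent vector of `τ_{i+1} = y_{i+1}⋯yₙ`. -/
def tauExp (i : Fin n) : Vars n →₀ ℕ :=
  Finsupp.indicator (Finset.map .inr (Finset.Ioi i.castSucc)) fun _ _ => 1

lemma monomial_sigmaExp {R : Type*} [CommSemiring R] (i : Fin n) :
    monomial (sigmaExp i) (1 : R) = ∏ j ∈ Finset.Iic i.castSucc, X (Sum.inl j) := by
  rw [sigmaExp, monomial_indicator_one, Finset.prod_map]
  rfl

lemma monomial_tauExp {R : Type*} [CommSemiring R] (i : Fin n) :
    monomial (tauExp i) (1 : R) = ∏ j ∈ Finset.Ioi i.castSucc, X (Sum.inr j) := by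
  rw [tauExp, monomial_indicator_one, Finset.prod_map]
  rfl

lemma sigmaExp_le_iff {i : Fin n} {s : Vars n →₀ ℕ} :
    sigmaExp i ≤ s ↔ ∀ j ≤ i.castSucc, 1 ≤ s (Sum.inl j) := by
  simp [sigmaExp, indicator_one_le_iff]

lemma tauExp_le_iff {i : Fin n} {s : Vars n →₀ ℕ} :
    tauExp i ≤ s ↔ ∀ j > i.castSucc, 1 ≤ s (Sum.inr j) := by
  simp [tauExp, indicator_one_le_iff]

lemma sigmaExp_inl (i : Fin n) (j : Fin (n + 1)) :
    sigmaExp i (Sum.inl j) = if j ≤ i.castSucc then 1 else 0 := by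
  simp [sigmaExp]

lemma sigmaExp_inr (i : Fin n) (j : Fin (n + 1)) : sigmaExp i (Sum.inr j) = 0 := by
  simp [sigmaExp]

lemma wt_sigmaExp (i : Fin n) : wt n (sigmaExp i) = chi n i := by
  ext l
  simp only [wt, sigmaExp_inl, sigmaExp_inr, chi, Fin.ext_iff, Fin.le_def,
    Fin.val_castSucc, Fin.val_succ]
  grind

lemma tauExp_inl (i : Fin n) (j : Fin (n + 1)) : tauExp i (Sum.inl j) = 0 := by
  simp [tauExp]

lemma tauExp_inr (i : Fin n) (j : Fin (n + 1)) :
    tauExp i (Sum.inr j) = if i.castSucc < j then 1 else 0 := by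
  simp [tauExp]

lemma wt_tauExp (i : Fin n) : wt n (tauExp i) = chi n i := by
  ext l
  simp only [wt, tauExp_inl, tauExp_inr, chi, Fin.ext_iff, Fin.lt_def,
    Fin.val_castSucc, Fin.val_succ]
  grind

lemma sigmaExp_le_or_tauExp_le {i : Fin n} {s : Vars n →₀ ℕ} (hs : wt n s = chi n i) :
    sigmaExp i ≤ s ∨ tauExp i ≤ s := by
  let f : Fin (n + 1) → ℤ := fun j => s (Sum.inl j) - s (Sum.inr j)
  have hstep (l : Fin n) : f l.castSucc - f l.succ = if l = i then 1 else 0 := by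
    rw [← show wt n s l = if l = i then 1 else 0 from congrFun hs l]
    simp only [f, wt]
    ring
  have hf (j : Fin (n + 1)) : f j = f 0 - if j ≤ i.castSucc then 0 else 1 :=
    eq_sub_ite_of_castSucc_sub_succ hstep j
  rcases le_or_gt 1 (f 0) with h0 | h0
  · refine .inl (sigmaExp_le_iff.mpr fun j hj => ?_)
    have hfj : f j = f 0 := by simpa [hj] using hf j
    lia
  · refine .inr (tauExp_le_iff.mpr fun j hj => ?_)
    have hfj : f j = f 0 - 1 := by simpa [hj.not_ge] using hf j
    lia

end Vars

lemma sigmaElt_eq_prod_Iic (k : Type) [Field k] (n : ℕ) (i : Fin n) :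
    sigmaElt k n i = ∏ j ∈ Finset.Iic i.castSucc, X (Sum.inl j) := by
  refine Finset.prod_congr (Finset.ext fun j => ?_) fun _ _ => rfl
  simp [Fin.le_def]

lemma tauElt_eq_prod_Ioi (k : Type) [Field k] (n : ℕ) (i : Fin n) :
    tauElt k n i = ∏ j ∈ Finset.Ioi i.castSucc, X (Sum.inr j) := by
  refine Finset.prod_congr (Finset.ext fun j => ?_) fun _ _ => rfl
  simp [Fin.lt_def]

theorem stmt3_general (R : Type*) [CommSemiring R] (n : ℕ) (i : Fin n) :
    (∀ p : MvPolynomial (Vars n) R, IsWeightedHomogeneous (varWeight n) p 0 →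
      ∀ q, IsWeightedHomogeneous (varWeight n) q (chi n i) →
        IsWeightedHomogeneous (varWeight n) (p * q) (chi n i)) ∧
    (∀ q : MvPolynomial (Vars n) R,
      IsWeightedHomogeneous (varWeight n) q (chi n i) ↔
        ∃ p₁, IsWeightedHomogeneous (varWeight n) p₁ 0 ∧
          ∃ p₂, IsWeightedHomogeneous (varWeight n) p₂ 0 ∧
            q = p₁ * (∏ j ∈ Finset.Iic i.castSucc, X (Sum.inl j)) +
              p₂ * (∏ j ∈ Finset.Ioi i.castSucc, X (Sum.inr j))) := by
  refine ⟨fun p hp q hq => zero_add (chi n i) ▸ hp.mul hq, fun q => ?_⟩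
  have hweight : ∀ e ∈ ({sigmaExp i, tauExp i} : Set _), weight (varWeight n) e = chi n i := by
    simp [weight_varWeight, wt_sigmaExp, wt_tauExp]
  have hdvd : ∀ s, weight (varWeight n) s = chi n i →
      ∃ e ∈ ({sigmaExp i, tauExp i} : Set _), e ≤ s := by
    simpa [weight_varWeight] using fun s => sigmaExp_le_or_tauExp_le (s := s)
  rw [← mem_span_monomial_iff_isWeightedHomogeneous hweight hdvd, Set.image_pair,
    Submodule.mem_span_pair, monomial_sigmaExp, monomial_tauExp]
  simp only [Subtype.exists, mem_weightedHomogeneousSubmodule, Algebra.smul_def,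
    SetLike.GradeZero.algebraMap_apply, exists_prop, eq_comm (a := q)]

/-- For each `i ∈ {1,…,n}` (encoded as `i : Fin n` representing `i+1`), the weight space
`A_{χ_i}` is an `A₀`-submodule of `A`, generated as an `A₀`-module by `σ_i` and `τ_i`:
`A_{χ_i} = A₀·σ_i + A₀·τ_i`. -/
theorem stmt3 (k : Type) [Field k] (n : ℕ) (hn : 1 ≤ n) (i : Fin n) :
    (∀ p ∈ wtSpace k n 0, ∀ q ∈ wtSpace k n (chi n i), p * q ∈ wtSpace k n (chi n i)) ∧
    (∀ q : MvPolynomial (Vars n) k,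
      q ∈ wtSpace k n (chi n i) ↔
        ∃ p₁ ∈ wtSpace k n 0, ∃ p₂ ∈ wtSpace k n 0,
          q = p₁ * sigmaElt k n i + p₂ * tauElt k n i) := by
  simpa only [mem_wtSpace_iff, sigmaElt_eq_prod_Iic, tauElt_eq_prod_Ioi] using stmt3_general k n i
end
end

section
/- Let $k$ be a field, $n \ge 2$, and let $(x_0,\dots,x_n,y_0,\dots,y_n) \in k^{2(n+1)}$ be a point for which there is NO pair of indices $0 \le j < l \le n$ with $x_j = 0$ and $y_l = 0$ (i.e. the point lies outside the GIT-unstable locus). Define scalars $\sigma_j = x_0x_1\cdots x_{j-1}$ for $1 \le j \le n-1$ and $\tau_j = y_jy_{j+1}\cdots y_n$ for $2 \le j \le n$. Then the $n-1$ vectors $s_1,\dots,s_{n-1} \in k^n$, where $s_i$ has the entry $\sigma_i$ in coordinate $i$, the entry $\tau_{i+1}$ in coordinate $i+1$, and $0$ in all other coordinates, are linearly independent over $k$. -/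
noncomputable section

/-!
If the leading entry `σ_i` of `s_i` and the trailing entry `τ_{j+1}` of `s_j` both vanish and
`i ≤ j`, then `x_l = y_m = 0` for some `l < i ≤ j < m`. So outside the unstable locus there is a cut
such that the sections before it have nonzero leading entries and the others nonzero trailing ones.
Deleting the coordinate at the cut makes these entries the diagonal of a square matrix, which is
triangular once its rows are ordered from the two ends towards the cut.
-/

theorem linearIndependent_of_triangular {R M ι α : Type*} [Ring R] [NoZeroDivisors R]
    [AddCommGroup M] [Module R M] [Preorder α] [WellFoundedLT α]
    {v : ι → M} (f : ι → M →ₗ[R] R) (rank : ι → α) (hdiag : ∀ i, f i (v i) ≠ 0)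
    (htri : ∀ i j, j ≠ i → f i (v j) ≠ 0 → rank j < rank i) :
    LinearIndependent R v := by
  rw [linearIndependent_iff']
  intro s g hg i
  induction i using (InvImage.wf rank wellFounded_lt).induction with
  | _ i ih =>
    intro hi
    have hoff : ∀ j ∈ s, j ≠ i → g j * f i (v j) = 0 := fun j hj hji ↦ by
      by_cases hfj : f i (v j) = 0
      · rw [hfj, mul_zero]
      · rw [ih j (htri i j hji hfj) hj, zero_mul]
    have hmul : g i * f i (v i) = 0 := calc
      g i * f i (v i) = ∑ j ∈ s, g j * f i (v j) :=
        (Finset.sum_eq_single_of_mem i hi hoff).symm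
      _ = f i (∑ j ∈ s, g j • v j) := by simp only [map_sum, map_smul, smul_eq_mul]
      _ = 0 := by rw [hg, map_zero]
    exact (mul_eq_zero.mp hmul).resolve_right (hdiag i)

theorem exists_cut_of_forall_le_or {n : ℕ} {P Q : Fin n → Prop}
    (h : ∀ i j, i ≤ j → P i ∨ Q j) :
    ∃ p : Fin (n + 1), (∀ i, i.castSucc < p → P i) ∧ ∀ j, p ≤ j.castSucc → Q j := by
  by_cases hP : ∀ i, P i
  · exact ⟨Fin.last n, fun i _ ↦ hP i, fun j hj ↦ absurd hj j.castSucc_lt_last.not_ge⟩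
  · obtain ⟨p, hp, hmin⟩ := exists_minimal_of_wellFoundedLT (¬ P ·) (not_forall.mp hP)
    refine ⟨p.castSucc, fun i hi ↦ ?_, fun j hj ↦ (h p j hj).resolve_left hp⟩
    by_contra hPi
    exact hi.not_ge (hmin hPi hi.le)

/-- The rows of the `n × (n + 1)` bidiagonal matrix with diagonal `σ` and superdiagonal `τ`: the
shape of the family of sections of the bundle. Indices are compared in `ℕ`, so that they need no
coercion between `Fin n` and `Fin (n + 1)`. -/
def bidiagonal {R : Type*} [Zero R] {n : ℕ} (σ τ : Fin n → R) (i : Fin n) (j : Fin (n + 1)) : R :=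
  if (j : ℕ) = i then σ i else if (j : ℕ) = i + 1 then τ i else 0

section Bidiagonal

variable {R : Type*} {n : ℕ}

theorem bidiagonal_castSucc [Zero R] (σ τ : Fin n → R) (i : Fin n) :
    bidiagonal σ τ i i.castSucc = σ i :=
  if_pos rfl

theorem bidiagonal_succ [Zero R] (σ τ : Fin n → R) (i : Fin n) :
    bidiagonal σ τ i i.succ = τ i := by
  simp [bidiagonal]

theorem eq_castSucc_or_eq_succ_of_bidiagonal_ne_zero [Zero R] {σ τ : Fin n → R} {i : Fin n}
    {j : Fin (n + 1)} (h : bidiagonal σ τ i j ≠ 0) : j = i.castSucc ∨ j = i.succ := by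
  contrapose! h
  simp only [ne_eq, Fin.ext_iff, Fin.val_castSucc, Fin.val_succ] at h
  simp only [bidiagonal, if_neg h.1, if_neg h.2]

theorem bidiagonal_succAbove_ne_zero [Zero R] {σ τ : Fin n → R} {p : Fin (n + 1)}
    (hσ : ∀ i, i.castSucc < p → σ i ≠ 0) (hτ : ∀ i, p ≤ i.castSucc → τ i ≠ 0) (i : Fin n) :
    bidiagonal σ τ i (p.succAbove i) ≠ 0 := by
  rcases lt_or_ge i.castSucc p with hi | hi
  · rw [Fin.succAbove_of_castSucc_lt p i hi, bidiagonal_castSucc]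
    exact hσ i hi
  · rw [Fin.succAbove_of_le_castSucc p i hi, bidiagonal_succ]
    exact hτ i hi

/-- The position of `i` when `Fin n` is enumerated from its two ends towards the cut `p`; a row
that meets the pivot coordinate `p.succAbove i` of another row `i` has smaller rank. Values on
different sides of the cut are never compared, so they may coincide. -/
def cutRank (p : Fin (n + 1)) (i : Fin n) : ℕ :=
  if i.castSucc < p then i else n - i

theorem cutRank_lt_of_bidiagonal_succAbove_ne_zero [Zero R] {σ τ : Fin n → R} (p : Fin (n + 1))
    {i j : Fin n} (hji : j ≠ i) (h : bidiagonal σ τ j (p.succAbove i) ≠ 0) :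
    cutRank p j < cutRank p i := by
  have hj := eq_castSucc_or_eq_succ_of_bidiagonal_ne_zero h
  rcases lt_or_ge i.castSucc p with hi | hi
  · rw [Fin.succAbove_of_castSucc_lt p i hi] at hj
    have hsucc : (i : ℕ) = j + 1 := by grind
    simp only [cutRank, Fin.lt_def, Fin.val_castSucc] at hi ⊢
    grind
  · rw [Fin.succAbove_of_le_castSucc p i hi] at hj
    have hsucc : (j : ℕ) = i + 1 := by grind
    simp only [cutRank, Fin.lt_def, Fin.le_def, Fin.val_castSucc] at hi ⊢
    grind

theorem linearIndependent_bidiagonal [Ring R] [NoZeroDivisors R] {σ τ : Fin n → R}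
    (h : ∀ i j, i ≤ j → σ i ≠ 0 ∨ τ j ≠ 0) : LinearIndependent R (bidiagonal σ τ) := by
  obtain ⟨p, hσ, hτ⟩ := exists_cut_of_forall_le_or h
  exact linearIndependent_of_triangular (fun i ↦ LinearMap.proj (p.succAbove i)) (cutRank p)
    (bidiagonal_succAbove_ne_zero hσ hτ)
    fun _ _ ↦ cutRank_lt_of_bidiagonal_succAbove_ne_zero p

end Bidiagonal

theorem stmt5_general {R : Type*} [CommRing R] [IsDomain R] {n : ℕ} (x y : Fin (n + 2) → R)
    (hstable : ¬ ∃ j l : Fin (n + 2), j < l ∧ x j = 0 ∧ y l = 0) :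
    LinearIndependent R (bidiagonal
      (fun i : Fin n ↦
        ∏ m ∈ Finset.univ.filter (fun m : Fin (n + 2) ↦ (m : ℕ) < (i : ℕ) + 1), x m)
      (fun i : Fin n ↦
        ∏ m ∈ Finset.univ.filter (fun m : Fin (n + 2) ↦ (i : ℕ) + 2 ≤ (m : ℕ)), y m)) := by
  refine linearIndependent_bidiagonal fun i j hij ↦ ?_
  by_contra! ⟨hσi, hτj⟩
  obtain ⟨l, hl, hxl⟩ := Finset.prod_eq_zero_iff.mp hσi
  obtain ⟨m, hm, hym⟩ := Finset.prod_eq_zero_iff.mp hτj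
  have hlm : l < m := by
    have hli := (Finset.mem_filter.mp hl).2
    have hjm := (Finset.mem_filter.mp hm).2
    lia
  exact hstable ⟨l, m, hlm, hxl, hym⟩

/-- Pointwise linear independence of the sections `s₁,…,s_{n-1}` of `⊕ᵢ Mᵢ` at any point
`(x₀,…,xₙ,y₀,…,yₙ)` outside the GIT-unstable locus `⋃_{j<l} {xⱼ = y_l = 0}`.

Encodings: `i : Fin (n-1)` represents the paper's index `i+1 ∈ {1,…,n-1}`, and
`j : Fin n` represents the coordinate `j+1 ∈ {1,…,n}` of `kⁿ`.  The vector `s_{i+1}` has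
`σ_{i+1} = x₀⋯xᵢ` in coordinate `i+1` (index `i`), `τ_{i+2} = y_{i+2}⋯yₙ` in coordinate
`i+2` (index `i+1`), and `0` elsewhere. -/
theorem stmt5 (k : Type) [Field k] (n : ℕ) (hn : 2 ≤ n)
    (x y : Fin (n + 1) → k)
    (hstable : ¬ ∃ j l : Fin (n + 1), j < l ∧ x j = 0 ∧ y l = 0) :
    LinearIndependent k
      (fun i : Fin (n - 1) => fun j : Fin n =>
        if (j : ℕ) = (i : ℕ) then
          ∏ m ∈ Finset.univ.filter (fun m : Fin (n + 1) => (m : ℕ) < (i : ℕ) + 1), x m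
        else if (j : ℕ) = (i : ℕ) + 1 then
          ∏ m ∈ Finset.univ.filter (fun m : Fin (n + 1) => (i : ℕ) + 2 ≤ (m : ℕ)), y m
        else 0) := by
  obtain ⟨n, rfl⟩ := Nat.exists_eq_add_of_le' (one_le_two.trans hn)
  exact stmt5_general x y hstable
end
end

section
/- Fix indices $0 \le j < i \le n$ and let $\chi = \chi_j - \chi_i \in \mathbb{Z}^n$, where $\chi_l$ denotes the $l$-th standard basis vector for $1 \le l \le n$ and $\chi_0 := 0$. Then the weight space $A_\chi$ is free as a module over the polynomial ring $k[T_0,\dots,T_n]$ (acting on $A$ via the $k$-algebra map $T_l \mapsto x_ly_l$) with basis $\{(x_i x_{i+1}\cdots x_n\, x_0 x_1\cdots x_{j-1})\,u^r : r \ge 0\} \cup \{(y_j y_{j+1}\cdots y_{i-1})\,v^s : s \ge 0\}$ (where $x_0\cdots x_{j-1} = 1$ if $j = 0$). -/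
open MvPolynomial

noncomputable section

/-- The vector `χ_l ∈ ℤⁿ` for `l ∈ {0,…,n}`: the `l`-th standard basis vector if
`1 ≤ l`, and `0` if `l = 0`.  (`m : Fin n` encodes the coordinate `m+1`.) -/
def stdChi (n : ℕ) (l : Fin (n + 1)) : Fin n → ℤ :=
  fun m => if (m : ℕ) + 1 = (l : ℕ) then 1 else 0

/-- `A` is an algebra (hence a module) over `R' = k[T₀,…,Tₙ]` via `Tᵢ ↦ xᵢyᵢ`. -/
instance polyAlg (k : Type) [Field k] (n : ℕ) :
    Algebra (MvPolynomial (Fin (n + 1)) k) (MvPolynomial (Vars n) k) :=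
  ((aeval fun i : Fin (n + 1) =>
      (X (Sum.inl i) * X (Sum.inr i) : MvPolynomial (Vars n) k)) :
    MvPolynomial (Fin (n + 1)) k →ₐ[k] MvPolynomial (Vars n) k).toRingHom.toAlgebra

/-- The claimed basis of `A_{χ_j - χ_i)`, indexed by `ℕ ⊕ ℕ`:
`Sum.inl r ↦ (xᵢx_{i+1}⋯xₙ x₀⋯x_{j-1})·uʳ` and `Sum.inr s ↦ (y_j⋯y_{i-1})·vˢ`. -/
def b6 (k : Type) [Field k] (n : ℕ) (j i : Fin (n + 1)) : ℕ ⊕ ℕ → MvPolynomial (Vars n) k :=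
  Sum.elim
    (fun r =>
      (∏ l ∈ Finset.univ.filter
          (fun l : Fin (n + 1) => (i : ℕ) ≤ (l : ℕ) ∨ (l : ℕ) < (j : ℕ)), X (Sum.inl l)) *
        (∏ l, X (Sum.inl l)) ^ r)
    (fun s =>
      (∏ l ∈ Finset.univ.filter
          (fun l : Fin (n + 1) => (j : ℕ) ≤ (l : ℕ) ∧ (l : ℕ) < (i : ℕ)), X (Sum.inr l)) *
        (∏ l, X (Sum.inr l)) ^ s)

/-!
The difference `e = (cₗ - dₗ)ₗ ∈ ℤ^{n+1}` of the exponents of a monomial `∏ xₗ^{cₗ} yₗ^{dₗ}` is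
unchanged by the action of every `T_l`, and each `e` is attained by exactly one monomial divisible
by no `x_l y_l`, namely `x^{e⁺} y^{e⁻}`. Hence `A` is free over `k[T]` on the monomials
`x^{e⁺} y^{e⁻}`. The weights of a monomial are the successive differences of `e`, so `A_χ` collects
the vectors of a single line `f + ℤ(1,…,1)`. For `χ = χ_j - χ_i` one can take for `f` the indicator
function of `{i,…,n} ∪ {0,…,j-1}`: then `f + r ≥ 0` for `r ≥ 0` produces the multiples of `uʳ`, and
`f - (s + 1) ≤ 0` for `s ≥ 0` produces those of `vˢ`.
-/

section Preliminaries

lemma forall_castSucc_sub_succ_eq_iff {n : ℕ} {G : Type*} [AddCommGroup G]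
    {e f : Fin (n + 1) → G} :
    (∀ l : Fin n, e l.castSucc - e l.succ = f l.castSucc - f l.succ) ↔
      ∃ m, (fun l => f l + m) = e := by
  constructor
  · refine fun h => ⟨e 0 - f 0, funext fun l => ?_⟩
    rw [← eq_sub_iff_add_eq']
    induction l using Fin.induction with
    | zero => rfl
    | succ l ih => rw [ih, sub_eq_sub_iff_sub_eq_sub, h l]
  · rintro ⟨m, rfl⟩ l
    exact add_sub_add_right_eq_sub _ _ _

variable {ι κ : Type*} [Fintype ι]

lemma prod_filter_mul_prod_pow {M : Type*} [CommMonoid M] (P : ι → Prop) [DecidablePred P]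
    (g : ι → M) (r : ℕ) :
    (∏ l with P l, g l) * (∏ l, g l) ^ r = ∏ l, g l ^ ((if P l then 1 else 0) + r) := by
  simp only [Finset.prod_filter, ← Finset.prod_pow, ← Finset.prod_mul_distrib, pow_add, pow_ite,
    pow_one, pow_zero]

lemma monomial_eq_prod_mul_prod [Fintype κ] {R : Type*} [CommSemiring R] (s : ι ⊕ κ →₀ ℕ) :
    (monomial s 1 : MvPolynomial (ι ⊕ κ) R) =
      (∏ l, X (Sum.inl l) ^ s (Sum.inl l)) * ∏ l, X (Sum.inr l) ^ s (Sum.inr l) := by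
  rw [monomial_eq, C_1, one_mul, Finsupp.prod_fintype _ _ fun _ => pow_zero _,
    Fintype.prod_sum_type]

end Preliminaries

section Tower

variable {ι κ R S M : Type*} [Semiring R] [Semiring S] [Module R S] [AddCommMonoid M] [Module S M]
  [Module R M] [IsScalarTower R S S] [IsScalarTower R S M]

theorem linearIndependent_of_basis_smul (b : Module.Basis ι R S) {v : κ → M}
    (hv : LinearIndependent R fun p : ι × κ => b p.1 • v p.2) : LinearIndependent S v := by
  let B : Module.Basis (ι × κ) R (κ →₀ S) := b.smulTower Finsupp.basisSingleOne
  have factor : (Finsupp.linearCombination S v).restrictScalars R =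
      Finsupp.linearCombination R (fun p : ι × κ => b p.1 • v p.2) ∘ₗ B.repr.toLinearMap :=
    B.ext fun p => by
      simp only [LinearMap.comp_apply, LinearEquiv.coe_coe, B.repr_self,
        Finsupp.linearCombination_single, one_smul]
      simp [B]
  have inj : Function.Injective ((Finsupp.linearCombination S v).restrictScalars R) := by
    rw [factor, LinearMap.coe_comp]
    exact Function.Injective.comp hv B.repr.injective
  exact inj

end Tower

section MonomialAction

variable {σ τ κ R : Type*} [CommSemiring R] [Module (MvPolynomial σ R) (MvPolynomial τ R)]
  [IsScalarTower R (MvPolynomial σ R) (MvPolynomial τ R)]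
  {φ : (σ →₀ ℕ) → (τ →₀ ℕ)}

theorem linearIndependent_monomial_of_injective
    (hφ : ∀ a s, (monomial a 1 : MvPolynomial σ R) • (monomial s 1 : MvPolynomial τ R) =
      monomial (φ a + s) 1)
    {e : κ → τ →₀ ℕ} (he : Function.Injective fun p : (σ →₀ ℕ) × κ => φ p.1 + e p.2) :
    LinearIndependent (MvPolynomial σ R) fun q => (monomial (e q) 1 : MvPolynomial τ R) := by
  refine linearIndependent_of_basis_smul (basisMonomials σ R) ?_
  simpa only [coe_basisMonomials, hφ, Function.comp_def] using
    (basisMonomials τ R).linearIndependent.comp _ he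

open scoped Pointwise in
theorem restrictScalars_span_range_monomial
    (hφ : ∀ a s, (monomial a 1 : MvPolynomial σ R) • (monomial s 1 : MvPolynomial τ R) =
      monomial (φ a + s) 1)
    (e : κ → τ →₀ ℕ) :
    (Submodule.span (MvPolynomial σ R)
        (Set.range fun q => (monomial (e q) 1 : MvPolynomial τ R))).restrictScalars R =
      restrictSupport R (Set.range fun p : (σ →₀ ℕ) × κ => φ p.1 + e p.2) := by
  have products : Set.range (basisMonomials σ R) •
      Set.range (fun q => (monomial (e q) 1 : MvPolynomial τ R)) =
      (monomial · 1) '' Set.range fun p : (σ →₀ ℕ) × κ => φ p.1 + e p.2 := by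
    rw [Set.range_smul_range, ← Set.range_comp]
    simp only [coe_basisMonomials, hφ, Function.comp_def]
  rw [← Submodule.span_smul_of_span_eq_top (basisMonomials σ R).span_eq, products,
    restrictSupport_eq_span]

end MonomialAction

section Exponents

variable {ι κ : Type*}

/-- The exponent vector of `∏ (xₗ yₗ)^{aₗ}`, the image of the monomial `T^a` in the polynomial ring
in the variables `xₗ` (`Sum.inl l`) and `yₗ` (`Sum.inr l`). -/
def diagonalExponent (a : ι →₀ ℕ) : ι ⊕ ι →₀ ℕ := a.sumElim a

/-- The vector `(cₗ - dₗ)ₗ` attached to the monomial `∏ xₗ^{cₗ} yₗ^{dₗ}`; it is invariant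
under multiplication by the products `xₗ yₗ`. -/
def exponentDiff (s : ι ⊕ ι →₀ ℕ) (l : ι) : ℤ := s (Sum.inl l) - s (Sum.inr l)

/-- The exponent vector of `x^{e⁺} y^{e⁻}`, the only monomial with difference vector `e` that is
divisible by no `xₗ yₗ`. -/
def reducedExponent [Finite ι] (e : ι → ℤ) : ι ⊕ ι →₀ ℕ :=
  Finsupp.equivFunOnFinite.symm (Sum.elim (fun l => (e l).toNat) fun l => (-e l).toNat)

@[simp]
lemma diagonalExponent_inl (a : ι →₀ ℕ) (l : ι) : diagonalExponent a (Sum.inl l) = a l := rfl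

@[simp]
lemma diagonalExponent_inr (a : ι →₀ ℕ) (l : ι) : diagonalExponent a (Sum.inr l) = a l := rfl

lemma diagonalExponent_injective : Function.Injective (diagonalExponent (ι := ι)) :=
  fun _ _ h => Finsupp.ext fun l => DFunLike.congr_fun h (Sum.inl l)

variable [Finite ι]

@[simp]
lemma reducedExponent_inl (e : ι → ℤ) (l : ι) : reducedExponent e (Sum.inl l) = (e l).toNat := rfl

@[simp]
lemma reducedExponent_inr (e : ι → ℤ) (l : ι) : reducedExponent e (Sum.inr l) = (-e l).toNat := rfl

lemma exponentDiff_diagonal_add_reduced (a : ι →₀ ℕ) (e : ι → ℤ) :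
    exponentDiff (diagonalExponent a + reducedExponent e) = e := by
  ext l
  simp only [exponentDiff, Finsupp.add_apply, diagonalExponent_inl, diagonalExponent_inr,
    reducedExponent_inl, reducedExponent_inr]
  omega

lemma exists_eq_diagonal_add_reduced (s : ι ⊕ ι →₀ ℕ) :
    ∃ a, s = diagonalExponent a + reducedExponent (exponentDiff s) := by
  refine ⟨Finsupp.equivFunOnFinite.symm fun l => min (s (Sum.inl l)) (s (Sum.inr l)), ?_⟩
  ext (l | l) <;>
    simp only [exponentDiff, Finsupp.add_apply, diagonalExponent_inl, diagonalExponent_inr,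
      reducedExponent_inl, reducedExponent_inr, Finsupp.equivFunOnFinite_symm_apply_apply] <;>
    omega

lemma diagonal_add_reduced_injective {e : κ → ι → ℤ} (he : Function.Injective e) :
    Function.Injective fun p : (ι →₀ ℕ) × κ => diagonalExponent p.1 + reducedExponent (e p.2) := by
  rintro ⟨a, q⟩ ⟨a', q'⟩ (h : diagonalExponent a + _ = diagonalExponent a' + _)
  obtain rfl : q = q' := he <| by
    rw [← exponentDiff_diagonal_add_reduced a (e q), h, exponentDiff_diagonal_add_reduced]
  rw [diagonalExponent_injective (add_right_cancel h)]

lemma range_diagonal_add_reduced (e : κ → ι → ℤ) :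
    (Set.range fun p : (ι →₀ ℕ) × κ => diagonalExponent p.1 + reducedExponent (e p.2)) =
      exponentDiff ⁻¹' Set.range e := by
  ext s
  constructor
  · rintro ⟨⟨a, q⟩, rfl⟩
    exact ⟨q, (exponentDiff_diagonal_add_reduced a (e q)).symm⟩
  · rintro ⟨q, hq⟩
    obtain ⟨a, ha⟩ := exists_eq_diagonal_add_reduced s
    exact ⟨(a, q), by rw [ha, ← hq]⟩

end Exponents

section Weights

variable {n : ℕ}

lemma wt_eq_exponentDiff_sub (s : Vars n →₀ ℕ) (l : Fin n) :
    wt n s l = exponentDiff s l.castSucc - exponentDiff s l.succ := by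
  simp only [wt, exponentDiff]
  ring

variable (k : Type) [Field k]

lemma wtSpace_eq_restrictSupport {f : Fin (n + 1) → ℤ} {χ : Fin n → ℤ}
    (hf : ∀ l : Fin n, f l.castSucc - f l.succ = χ l) :
    wtSpace k n χ =
      restrictSupport k (exponentDiff ⁻¹' Set.range fun (m : ℤ) l => f l + m) := by
  ext p
  simp only [wtSpace, Set.mem_ofPred_eq, SetLike.mem_coe, mem_restrictSupport_iff, Set.subset_def,
    Set.mem_preimage, Set.mem_range, wt_eq_exponentDiff_sub, ← hf,
    forall_castSucc_sub_succ_eq_iff]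

instance : IsScalarTower k (MvPolynomial (Fin (n + 1)) k) (MvPolynomial (Vars n) k) :=
  .of_algebraMap_eq fun c => by
    simp [RingHom.algebraMap_toAlgebra, algebraMap_eq]

lemma algebraMap_monomial_one (a : Fin (n + 1) →₀ ℕ) :
    algebraMap (MvPolynomial (Fin (n + 1)) k) (MvPolynomial (Vars n) k) (monomial a 1) =
      monomial (diagonalExponent a) 1 := by
  have image : algebraMap (MvPolynomial (Fin (n + 1)) k) (MvPolynomial (Vars n) k) (monomial a 1) =
      ∏ l, (X (Sum.inl l) * X (Sum.inr l)) ^ a l := by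
    change aeval (fun l => X (Sum.inl l) * X (Sum.inr l)) (monomial a (1 : k)) = _
    rw [aeval_monomial, map_one, one_mul, Finsupp.prod_fintype _ _ fun _ => pow_zero _]
  simp only [image, monomial_eq_prod_mul_prod, diagonalExponent_inl, diagonalExponent_inr, mul_pow,
    Finset.prod_mul_distrib]

lemma monomial_one_smul_monomial_one (a : Fin (n + 1) →₀ ℕ) (s : Vars n →₀ ℕ) :
    (monomial a 1 : MvPolynomial (Fin (n + 1)) k) • (monomial s 1 : MvPolynomial (Vars n) k) =
      monomial (diagonalExponent a + s) 1 := by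
  rw [Algebra.smul_def, algebraMap_monomial_one, monomial_mul, one_mul]

end Weights

/-- An `f` as required exists for every `χ` and is unique up to a constant, so every weight space
is covered. -/
theorem stmt6_general (k : Type) [Field k] (n : ℕ) (χ : Fin n → ℤ) (f : Fin (n + 1) → ℤ)
    (hf : ∀ l : Fin n, f l.castSucc - f l.succ = χ l) :
    LinearIndependent (MvPolynomial (Fin (n + 1)) k)
      (fun m : ℤ => (monomial (reducedExponent fun l => f l + m) 1 : MvPolynomial (Vars n) k)) ∧
    (↑(Submodule.span (MvPolynomial (Fin (n + 1)) k) (Set.range fun m : ℤ =>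
        (monomial (reducedExponent fun l => f l + m) 1 : MvPolynomial (Vars n) k))) :
      Set (MvPolynomial (Vars n) k)) = wtSpace k n χ := by
  have translates_injective : Function.Injective fun (m : ℤ) l => f l + m :=
    fun _ _ h => add_left_cancel (congrFun h 0)
  have exponents_injective := diagonal_add_reduced_injective translates_injective
  constructor
  · exact linearIndependent_monomial_of_injective (monomial_one_smul_monomial_one k)
      exponents_injective
  · rw [wtSpace_eq_restrictSupport k hf, ← range_diagonal_add_reduced,
      ← restrictScalars_span_range_monomial (monomial_one_smul_monomial_one k)
        fun m : ℤ => reducedExponent fun l => f l + m,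
      Submodule.coe_restrictScalars]

section CyclicInterval

variable {n : ℕ} {j i : Fin (n + 1)}

/-- The indicator function of `{i,…,n} ∪ {0,…,j-1}`, the indices of the variables in
`x_i ⋯ x_n x_0 ⋯ x_{j-1}`; for `j ≤ i` its successive differences are the weight
`χ_j - χ_i`. -/
def wrapIndicator (j i l : Fin (n + 1)) : ℤ := if i ≤ l ∨ l < j then 1 else 0

lemma wrapIndicator_castSucc_sub_succ (hij : j ≤ i) (l : Fin n) :
    wrapIndicator j i l.castSucc - wrapIndicator j i l.succ = (stdChi n j - stdChi n i) l := by
  simp only [wrapIndicator, stdChi, Pi.sub_apply, Fin.le_def, Fin.lt_def, Fin.val_castSucc,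
    Fin.val_succ] at hij ⊢
  split_ifs <;> omega

lemma b6_intEquivNatSumNat (k : Type) [Field k] (m : ℤ) :
    b6 k n j i (Equiv.intEquivNatSumNat m) =
      monomial (reducedExponent fun l => wrapIndicator j i l + m) 1 := by
  rw [monomial_eq_prod_mul_prod]
  rcases m with r | s
  · have no_y : ∀ l, (-(wrapIndicator j i l + r)).toNat = 0 := fun l => by
      unfold wrapIndicator; split_ifs <;> omega
    have exp_x : ∀ l, (wrapIndicator j i l + r).toNat = (if i ≤ l ∨ l < j then 1 else 0) + r :=
      fun l => by unfold wrapIndicator; split_ifs <;> omega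
    simp only [Int.ofNat_eq_natCast, reducedExponent_inl, reducedExponent_inr, no_y, exp_x,
      pow_zero, Finset.prod_const_one, mul_one]
    exact prod_filter_mul_prod_pow _ _ r
  · have no_x : ∀ l, (wrapIndicator j i l + Int.negSucc s).toNat = 0 := fun l => by
      unfold wrapIndicator; split_ifs <;> omega
    have exp_y : ∀ l, (-(wrapIndicator j i l + Int.negSucc s)).toNat =
        (if j ≤ l ∧ l < i then 1 else 0) + s := fun l => by
      unfold wrapIndicator; split_ifs <;> omega
    simp only [reducedExponent_inl, reducedExponent_inr, no_x, exp_y, pow_zero,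
      Finset.prod_const_one, one_mul]
    exact prod_filter_mul_prod_pow _ _ s

end CyclicInterval

/-- For `0 ≤ j < i ≤ n`, the weight space `A_{χ_j - χ_i}` is free as a module over
`k[T₀,…,Tₙ]` (acting via `T_l ↦ x_l y_l`) with basis
`{(xᵢ⋯xₙ x₀⋯x_{j-1})uʳ : r ≥ 0} ∪ {(y_j⋯y_{i-1})vˢ : s ≥ 0}`: the family is linearly
independent and its span is exactly `A_{χ_j - χ_i}`. -/
theorem stmt6 (k : Type) [Field k] (n : ℕ) (hn : 1 ≤ n) (j i : Fin (n + 1)) (hij : j < i) :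
    LinearIndependent (MvPolynomial (Fin (n + 1)) k) (b6 k n j i) ∧
    (↑(Submodule.span (MvPolynomial (Fin (n + 1)) k) (Set.range (b6 k n j i))) :
        Set (MvPolynomial (Vars n) k)) = wtSpace k n (stdChi n j - stdChi n i) := by
  have reindexed : b6 k n j i ∘ Equiv.intEquivNatSumNat =
      fun m : ℤ => monomial (reducedExponent fun l => wrapIndicator j i l + m) 1 :=
    funext (b6_intEquivNatSumNat k)
  rw [← linearIndependent_equiv Equiv.intEquivNatSumNat,
    ← Equiv.intEquivNatSumNat.surjective.range_comp, reindexed]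
  exact stmt6_general k n _ _ (wrapIndicator_castSucc_sub_succ hij.le)
end
end

section
/- The complex $C$ satisfies $d \circ d = 0$, and its cohomology is: $H^0(C) \cong k$; $H^{-m}(C) = 0$ for all odd $m \ge 1$; and $H^{-m}(C) \cong k$ for all even $m \ge 2$, with $H^{-m}(C)$ spanned by the class of $w_m^{\alpha} + w_m^{\beta}$. (This is the computation $H^*(\Gamma) = k[\eta]$, $\deg \eta = -2$, $\eta = \alpha\beta + \beta\alpha$, for the derived contraction algebra of the conifold.) -/
open MvPolynomial

noncomputable section

/-- `S = k[x,y]`, with `x = X 0` and `y = X 1`. -/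
abbrev Sk (k : Type) [Field k] : Type := MvPolynomial (Fin 2) k

/-- The differential `d : C^{-1} → C^0`, `(p, q) ↦ p·x + q·y`
(corresponding to `dα = x`, `dβ = y`). -/
def d1 (k : Type) [Field k] : Sk k × Sk k →ₗ[Sk k] Sk k :=
  (X 0 : Sk k) • LinearMap.fst (Sk k) (Sk k) (Sk k) +
    (X 1 : Sk k) • LinearMap.snd (Sk k) (Sk k) (Sk k)

/-- The differential `C^{-m} → C^{-m+1}` for even `m ≥ 2`, in the bases
`(w_m^α, w_m^β)`, `(w_{m-1}^α, w_{m-1}^β)`: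
`d(w^α) = x·w^β - y·w^α` and `d(w^β) = y·w^α - x·w^β`. -/
def dEven (k : Type) [Field k] : Sk k × Sk k →ₗ[Sk k] Sk k × Sk k :=
  LinearMap.prod
    ((-(X 1 : Sk k)) • LinearMap.fst (Sk k) (Sk k) (Sk k) +
      (X 1 : Sk k) • LinearMap.snd (Sk k) (Sk k) (Sk k))
    ((X 0 : Sk k) • LinearMap.fst (Sk k) (Sk k) (Sk k) +
      (-(X 0 : Sk k)) • LinearMap.snd (Sk k) (Sk k) (Sk k))

/-- The differential `C^{-m} → C^{-m+1}` for odd `m ≥ 3`: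
`d(w^α) = x·(w^α + w^β)` and `d(w^β) = y·(w^α + w^β)`. -/
def dOdd (k : Type) [Field k] : Sk k × Sk k →ₗ[Sk k] Sk k × Sk k :=
  LinearMap.prod
    ((X 0 : Sk k) • LinearMap.fst (Sk k) (Sk k) (Sk k) +
      (X 1 : Sk k) • LinearMap.snd (Sk k) (Sk k) (Sk k))
    ((X 0 : Sk k) • LinearMap.fst (Sk k) (Sk k) (Sk k) +
      (X 1 : Sk k) • LinearMap.snd (Sk k) (Sk k) (Sk k))

/-- The differential `D m : C^{-m} → C^{-m+1}` for `m ≥ 2`. -/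
def D (k : Type) [Field k] (m : ℕ) : Sk k × Sk k →ₗ[Sk k] Sk k × Sk k :=
  if Even m then dEven k else dOdd k

/- The complex splices the Koszul complex `R → R² → R` of `(x, y)` with the exact sequence
`R → R² → R` formed by the diagonal and the subtraction map: in even degrees `d` is subtraction
followed by the injection `R → R²` of the Koszul complex, in odd degrees it is the map `R² → R` of
the Koszul complex, with image the ideal `(x, y)`, followed by the diagonal. When `(x, y)` is a
regular sequence, the cycles in odd degrees are the Koszul syzygies and hence boundaries, while in
even degrees the cycles are the diagonal copy of `R` and the boundaries the diagonal copy of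
`(x, y)`, with quotient `R / (x, y)`. -/

section Splice

variable {R : Type*} [CommRing R]

/-- The map `R² → R` of the Koszul complex of `(x, y)`. -/
def koszulRow (x y : R) : R × R →ₗ[R] R :=
  x • LinearMap.fst R R R + y • LinearMap.snd R R R

/-- The map `R → R²` of the Koszul complex of `(x, y)`, with the sign chosen so that
`r ↦ (-y r, x r)`. -/
def koszulCol (x y : R) : R →ₗ[R] R × R :=
  LinearMap.prod (-y • LinearMap.id) (x • LinearMap.id)

variable (R) in
/-- The diagonal `r ↦ (r, r)`, that is, `r ↦ r (w_m^α + w_m^β)`. -/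
def diagonalMap : R →ₗ[R] R × R :=
  LinearMap.prod LinearMap.id LinearMap.id

variable (R) in
/-- The subtraction map `(p, q) ↦ p - q`, the cokernel of the diagonal. -/
def subtractionMap : R × R →ₗ[R] R :=
  LinearMap.fst R R R - LinearMap.snd R R R

/-- The differential `C^{-m} → C^{-m+1}`, for `m ≥ 2`, of the DG-algebra
`R⟨α, β⟩ / (α², β²)` with `dα = x` and `dβ = y`, in the bases of alternating words. -/
def wordDifferential (x y : R) (m : ℕ) : R × R →ₗ[R] R × R :=
  if Even m then koszulCol x y ∘ₗ subtractionMap R else diagonalMap R ∘ₗ koszulRow x y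

@[simp]
theorem koszulRow_apply (x y : R) (z : R × R) : koszulRow x y z = x * z.1 + y * z.2 := rfl

@[simp]
theorem koszulCol_apply (x y r : R) : koszulCol x y r = (-y * r, x * r) := rfl

@[simp]
theorem diagonalMap_apply (r : R) : diagonalMap R r = (r, r) := rfl

@[simp]
theorem subtractionMap_apply (z : R × R) : subtractionMap R z = z.1 - z.2 := rfl

theorem koszulRow_comp_koszulCol (x y : R) : koszulRow x y ∘ₗ koszulCol x y = 0 := by
  ext
  simp [mul_comm]

theorem range_koszulRow (x y : R) :
    LinearMap.range (koszulRow x y) = Ideal.span {x, y} := by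
  ext z
  simp [Ideal.mem_span_pair, mul_comm]

theorem isWeaklyRegular_pair_iff {x y : R} :
    RingTheory.Sequence.IsWeaklyRegular R [x, y] ↔
      IsSMulRegular R x ∧ ∀ r, x ∣ y * r → x ∣ r := by
  rw [RingTheory.Sequence.isWeaklyRegular_cons_iff,
    RingTheory.Sequence.isWeaklyRegular_singleton_iff,
    isSMulRegular_quotient_iff_mem_of_smul_mem]
  simp [Submodule.mem_smul_pointwise_iff_exists, dvd_def, eq_comm]

theorem ker_koszulCol {x : R} (hx : IsSMulRegular R x) (y : R) :
    LinearMap.ker (koszulCol x y) = ⊥ := by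
  refine LinearMap.ker_eq_bot'.2 fun r hr ↦ hx.right_eq_zero_of_smul ?_
  exact congrArg Prod.snd hr

theorem ker_koszulRow {x y : R} (h : RingTheory.Sequence.IsWeaklyRegular R [x, y]) :
    LinearMap.ker (koszulRow x y) = LinearMap.range (koszulCol x y) := by
  obtain ⟨hx, hdvd⟩ := isWeaklyRegular_pair_iff.1 h
  refine le_antisymm ?_ (LinearMap.range_le_ker_iff.2 (koszulRow_comp_koszulCol x y))
  rintro ⟨p, q⟩ (hpq : x * p + y * q = 0)
  obtain ⟨r, rfl⟩ := hdvd q ⟨-p, by linear_combination hpq⟩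
  have hp : -y * r = p := hx (by simp only [smul_eq_mul]; linear_combination -hpq)
  exact ⟨r, Prod.ext hp rfl⟩

theorem diagonalMap_injective : Function.Injective (diagonalMap R) :=
  fun _ _ h ↦ congrArg Prod.fst h

theorem subtractionMap_surjective : Function.Surjective (subtractionMap R) :=
  fun r ↦ ⟨(r, 0), sub_zero r⟩

theorem ker_subtractionMap :
    LinearMap.ker (subtractionMap R) = LinearMap.range (diagonalMap R) := by
  ext ⟨p, q⟩
  simp [sub_eq_zero]

theorem subtractionMap_comp_diagonalMap : subtractionMap R ∘ₗ diagonalMap R = 0 :=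
  LinearMap.range_le_ker_iff.1 ker_subtractionMap.ge

theorem wordDifferential_of_even (x y : R) {m : ℕ} (hm : Even m) :
    wordDifferential x y m = koszulCol x y ∘ₗ subtractionMap R :=
  if_pos hm

theorem wordDifferential_of_odd (x y : R) {m : ℕ} (hm : Odd m) :
    wordDifferential x y m = diagonalMap R ∘ₗ koszulRow x y :=
  if_neg (Nat.not_even_iff_odd.2 hm)

theorem range_wordDifferential_of_even (x y : R) {m : ℕ} (hm : Even m) :
    LinearMap.range (wordDifferential x y m) = LinearMap.range (koszulCol x y) := by
  rw [wordDifferential_of_even x y hm]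
  exact LinearMap.range_comp_of_range_eq_top _ (LinearMap.range_eq_top.2 subtractionMap_surjective)

theorem range_wordDifferential_of_odd (x y : R) {m : ℕ} (hm : Odd m) :
    LinearMap.range (wordDifferential x y m) =
      Submodule.map (diagonalMap R) (Ideal.span {x, y}) := by
  rw [wordDifferential_of_odd x y hm, LinearMap.range_comp, range_koszulRow]

theorem ker_wordDifferential_of_even {x : R} (hx : IsSMulRegular R x) (y : R) {m : ℕ}
    (hm : Even m) :
    LinearMap.ker (wordDifferential x y m) = LinearMap.range (diagonalMap R) := by
  rw [wordDifferential_of_even x y hm, LinearMap.ker_comp_of_ker_eq_bot _ (ker_koszulCol hx y),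
    ker_subtractionMap]

theorem ker_wordDifferential_of_odd (x y : R) {m : ℕ} (hm : Odd m) :
    LinearMap.ker (wordDifferential x y m) = LinearMap.ker (koszulRow x y) := by
  rw [wordDifferential_of_odd x y hm]
  exact LinearMap.ker_comp_of_ker_eq_bot _ (LinearMap.ker_eq_bot.2 diagonalMap_injective)

theorem koszulRow_comp_wordDifferential_of_even (x y : R) {m : ℕ} (hm : Even m) :
    koszulRow x y ∘ₗ wordDifferential x y m = 0 := by
  rw [wordDifferential_of_even x y hm, ← LinearMap.comp_assoc, koszulRow_comp_koszulCol,
    LinearMap.zero_comp]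

theorem wordDifferential_comp_succ (x y : R) (m : ℕ) :
    wordDifferential x y m ∘ₗ wordDifferential x y (m + 1) = 0 := by
  rcases m.even_or_odd with hm | hm
  · rw [wordDifferential_of_even x y hm, wordDifferential_of_odd x y hm.add_one,
      LinearMap.comp_assoc, ← LinearMap.comp_assoc _ _ (subtractionMap R),
      subtractionMap_comp_diagonalMap, LinearMap.zero_comp, LinearMap.comp_zero]
  · rw [wordDifferential_of_odd x y hm, LinearMap.comp_assoc,
      koszulRow_comp_wordDifferential_of_even x y hm.add_one, LinearMap.comp_zero]

theorem ker_wordDifferential_of_odd_eq_range {x y : R}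
    (h : RingTheory.Sequence.IsWeaklyRegular R [x, y]) {m : ℕ} (hm : Odd m) :
    LinearMap.ker (wordDifferential x y m) = LinearMap.range (wordDifferential x y (m + 1)) := by
  rw [ker_wordDifferential_of_odd x y hm, ker_koszulRow h,
    range_wordDifferential_of_even x y hm.add_one]

theorem diagonalMap_mem_range_wordDifferential_iff (x y : R) {m : ℕ} (hm : Odd m) (r : R) :
    diagonalMap R r ∈ LinearMap.range (wordDifferential x y m) ↔ r ∈ Ideal.span {x, y} := by
  rw [range_wordDifferential_of_odd x y hm]
  exact diagonalMap_injective.mem_set_image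

end Splice

section Residue

variable {A R : Type*} [CommRing A] [CommRing R] [Algebra A R] {I : Ideal R}

theorem exists_sub_algebraMap_mem (h : Function.Surjective (algebraMap A (R ⧸ I))) (r : R) :
    ∃ c : A, r - algebraMap A R c ∈ I := by
  obtain ⟨c, hc⟩ := h (Ideal.Quotient.mk I r)
  exact ⟨c, Ideal.Quotient.eq.1 hc.symm⟩

theorem eq_zero_of_algebraMap_mem (h : Function.Injective (algebraMap A (R ⧸ I))) {c : A}
    (hc : algebraMap A R c ∈ I) : c = 0 :=
  (map_eq_zero_iff _ h).1 (Ideal.Quotient.eq_zero_iff_mem.2 hc)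

end Residue

section Variables

variable {σ A : Type*} [CommRing A]

theorem X_dvd_iff_forall_mem_support {i : σ} {p : MvPolynomial σ A} :
    X i ∣ p ↔ ∀ m ∈ p.support, m i ≠ 0 := by
  simpa [Ideal.mem_span_singleton] using mem_ideal_span_X_image (x := p) (s := {i})

theorem isWeaklyRegular_X_pair {i j : σ} (hij : i ≠ j) :
    RingTheory.Sequence.IsWeaklyRegular (MvPolynomial σ A)
      [(X i : MvPolynomial σ A), X j] := by
  refine isWeaklyRegular_pair_iff.2 ⟨isRegular_X.left.isSMulRegular, fun p hp ↦ ?_⟩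
  rw [X_dvd_iff_forall_mem_support, support_X_mul] at hp
  refine X_dvd_iff_forall_mem_support.2 fun m hm ↦ ?_
  simpa [Finsupp.single_eq_of_ne hij] using hp _ (Finset.mem_map_of_mem _ hm)

theorem mem_idealOfVars_iff {p : MvPolynomial σ A} :
    p ∈ idealOfVars σ A ↔ constantCoeff p = 0 := by
  simpa [constantCoeff_eq, Finsupp.degree_eq_zero_iff] using mem_pow_idealOfVars_iff' 1 p

theorem bijective_algebraMap_quotient_idealOfVars :
    Function.Bijective (algebraMap A (MvPolynomial σ A ⧸ idealOfVars σ A)) := by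
  refine ⟨(injective_iff_map_eq_zero _).2 fun c hc ↦ ?_,
    Ideal.Quotient.mk_surjective.forall.2 fun p ↦ ⟨constantCoeff p, Ideal.Quotient.eq.2 ?_⟩⟩
  · have hmem : C c ∈ idealOfVars σ A := Ideal.Quotient.eq_zero_iff_mem.1 hc
    simpa using mem_idealOfVars_iff.1 hmem
  · simp [mem_idealOfVars_iff, algebraMap_eq]

theorem idealOfVars_fin_two : idealOfVars (Fin 2) A = Ideal.span {X 0, X 1} := by
  have hrange : Set.range (X : Fin 2 → MvPolynomial (Fin 2) A) = {X 0, X 1} := by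
    ext
    simp [eq_comm]
  rw [idealOfVars, hrange]

end Variables

theorem d1_eq_koszulRow (k : Type) [Field k] : d1 k = koszulRow (X 0) (X 1) := rfl

theorem dEven_eq_koszulCol_comp_subtractionMap (k : Type) [Field k] :
    dEven k = koszulCol (X 0) (X 1) ∘ₗ subtractionMap (Sk k) := by
  refine LinearMap.ext fun z ↦ Prod.ext ?_ ?_ <;>
    simp [dEven, mul_add, sub_eq_add_neg, add_comm]

theorem D_eq_wordDifferential (k : Type) [Field k] (m : ℕ) :
    D k m = wordDifferential (X 0) (X 1) m := by
  rw [D, dEven_eq_koszulCol_comp_subtractionMap]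
  rfl

theorem stmt11_general {A R : Type*} [CommRing A] [CommRing R] [Algebra A R] {x y : R}
    (hreg : RingTheory.Sequence.IsWeaklyRegular R [x, y])
    (hres : Function.Bijective (algebraMap A (R ⧸ Ideal.span {x, y}))) :
    (koszulRow x y ∘ₗ wordDifferential x y 2 = 0) ∧
    (∀ m : ℕ, 2 ≤ m → wordDifferential x y m ∘ₗ wordDifferential x y (m + 1) = 0) ∧
    (∀ z : R, ∃ c : A, z - algebraMap A R c ∈ LinearMap.range (koszulRow x y)) ∧
    (∀ c : A, algebraMap A R c ∈ LinearMap.range (koszulRow x y) → c = 0) ∧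
    (LinearMap.ker (koszulRow x y) = LinearMap.range (wordDifferential x y 2)) ∧
    (∀ m : ℕ, 3 ≤ m → Odd m →
      LinearMap.ker (wordDifferential x y m) = LinearMap.range (wordDifferential x y (m + 1))) ∧
    (∀ m : ℕ, 2 ≤ m → Even m →
      wordDifferential x y m (1, 1) = 0 ∧
      (∀ z ∈ LinearMap.ker (wordDifferential x y m),
        ∃ c : A, z - algebraMap A R c • ((1 : R), (1 : R)) ∈
          LinearMap.range (wordDifferential x y (m + 1))) ∧
      (∀ c : A, algebraMap A R c • ((1 : R), (1 : R)) ∈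
        LinearMap.range (wordDifferential x y (m + 1)) → c = 0)) := by
  have hker {m : ℕ} (hm : Even m) :
      LinearMap.ker (wordDifferential x y m) = LinearMap.range (diagonalMap R) :=
    ker_wordDifferential_of_even (isWeaklyRegular_pair_iff.1 hreg).1 y hm
  have hdiag (r : R) : r • ((1 : R), (1 : R)) = diagonalMap R r := by simp
  simp only [range_koszulRow, hdiag]
  refine ⟨koszulRow_comp_wordDifferential_of_even x y even_two,
    fun m _ ↦ wordDifferential_comp_succ x y m,
    exists_sub_algebraMap_mem hres.surjective,
    fun c ↦ eq_zero_of_algebraMap_mem hres.injective, ?_,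
    fun m _ hm ↦ ker_wordDifferential_of_odd_eq_range hreg hm,
    fun m _ hm ↦ ⟨?_, fun z hz ↦ ?_, fun c hc ↦ ?_⟩⟩
  · rw [ker_koszulRow hreg, range_wordDifferential_of_even x y even_two]
  · exact (hker hm).ge ⟨1, rfl⟩
  · obtain ⟨r, rfl⟩ := (hker hm).le hz
    obtain ⟨c, hc⟩ := exists_sub_algebraMap_mem hres.surjective r
    refine ⟨c, ?_⟩
    rwa [← map_sub, diagonalMap_mem_range_wordDifferential_iff x y hm.add_one]
  · rw [diagonalMap_mem_range_wordDifferential_iff x y hm.add_one] at hc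
    exact eq_zero_of_algebraMap_mem hres.injective hc

/-- The complex `C` (the derived contraction algebra of the conifold) satisfies
`d ∘ d = 0`, and its cohomology is: `H⁰(C) ≅ k` (spanned by the class of `1`);
`H^{-m}(C) = 0` for odd `m ≥ 1`; and `H^{-m}(C) ≅ k` for even `m ≥ 2`, spanned by the
class of `w_m^α + w_m^β` (i.e. `(1,1)`).  This is `H^*(Γ) = k[η]`, `deg η = -2`,
`η = αβ + βα`. -/
theorem stmt11 (k : Type) [Field k] :
    -- d ∘ d = 0
    (d1 k ∘ₗ D k 2 = 0) ∧
    (∀ m : ℕ, 2 ≤ m → D k m ∘ₗ D k (m + 1) = 0) ∧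
    -- H⁰(C) ≅ k, spanned by the class of 1
    (∀ z : Sk k, ∃ c : k, z - algebraMap k (Sk k) c ∈ LinearMap.range (d1 k)) ∧
    (∀ c : k, algebraMap k (Sk k) c ∈ LinearMap.range (d1 k) → c = 0) ∧
    -- H^{-m}(C) = 0 for odd m ≥ 1
    (LinearMap.ker (d1 k) = LinearMap.range (D k 2)) ∧
    (∀ m : ℕ, 3 ≤ m → Odd m → LinearMap.ker (D k m) = LinearMap.range (D k (m + 1))) ∧
    -- H^{-m}(C) ≅ k for even m ≥ 2, spanned by the class of w_m^α + w_m^β = (1,1)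
    (∀ m : ℕ, 2 ≤ m → Even m →
      D k m (1, 1) = 0 ∧
      (∀ z ∈ LinearMap.ker (D k m),
        ∃ c : k, z - algebraMap k (Sk k) c • ((1 : Sk k), (1 : Sk k)) ∈
          LinearMap.range (D k (m + 1))) ∧
      (∀ c : k, algebraMap k (Sk k) c • ((1 : Sk k), (1 : Sk k)) ∈
        LinearMap.range (D k (m + 1)) → c = 0)) := by
  simp only [d1_eq_koszulRow, D_eq_wordDifferential]
  exact stmt11_general (isWeaklyRegular_X_pair zero_ne_one)
    (idealOfVars_fin_two (A := k) ▸ bijective_algebraMap_quotient_idealOfVars)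
end
end

section
/- There is a $k$-algebra isomorphism $Q \to P$ determined by $E_1 \mapsto E_1$, $E_2 \mapsto E_2$, $a \mapsto B$, $c \mapsto A$, $\ell \mapsto XE_2$, $m \mapsto YE_1$. (This identifies the contraction algebra $H^0(\Gamma)$ of the flop of $uv = xy(x^2+y^3)$, as computed from the relative Fukaya category model, with August's presentation of the contraction algebra $B_{con}$.) -/
noncomputable section

/-- Generators of `P`: `0` is `X`, `1` is `Y`, `2` is `E₁`, `3` is `E₂`, `4` is `A`,
`5` is `B`. -/
inductive PRel (k : Type) [Field k] :
    FreeAlgebra k (Fin 6) → FreeAlgebra k (Fin 6) → Prop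
  | centX : ∀ g : Fin 6,
      PRel k (FreeAlgebra.ι k 0 * FreeAlgebra.ι k g) (FreeAlgebra.ι k g * FreeAlgebra.ι k 0)
  | centY : ∀ g : Fin 6,
      PRel k (FreeAlgebra.ι k 1 * FreeAlgebra.ι k g) (FreeAlgebra.ι k g * FreeAlgebra.ι k 1)
  | total : PRel k (FreeAlgebra.ι k 2 + FreeAlgebra.ι k 3) 1
  | orth12 : PRel k (FreeAlgebra.ι k 2 * FreeAlgebra.ι k 3) 0
  | orth21 : PRel k (FreeAlgebra.ι k 3 * FreeAlgebra.ι k 2) 0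
  | idem1 : PRel k (FreeAlgebra.ι k 2 * FreeAlgebra.ι k 2) (FreeAlgebra.ι k 2)
  | idem2 : PRel k (FreeAlgebra.ι k 3 * FreeAlgebra.ι k 3) (FreeAlgebra.ι k 3)
  | sandA : PRel k (FreeAlgebra.ι k 2 * FreeAlgebra.ι k 4 * FreeAlgebra.ι k 3)
      (FreeAlgebra.ι k 4)
  | sandB : PRel k (FreeAlgebra.ι k 3 * FreeAlgebra.ι k 5 * FreeAlgebra.ι k 2)
      (FreeAlgebra.ι k 5)
  | relAB : PRel k (FreeAlgebra.ι k 4 * FreeAlgebra.ι k 5)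
      ((FreeAlgebra.ι k 0 ^ 2 + FreeAlgebra.ι k 1 ^ 3) * FreeAlgebra.ι k 2)
  | relBA : PRel k (FreeAlgebra.ι k 5 * FreeAlgebra.ι k 4)
      ((FreeAlgebra.ι k 0 ^ 2 + FreeAlgebra.ι k 1 ^ 3) * FreeAlgebra.ι k 3)
  | relXE1 : PRel k (FreeAlgebra.ι k 0 * FreeAlgebra.ι k 2) 0
  | relYE2 : PRel k (FreeAlgebra.ι k 1 * FreeAlgebra.ι k 3) 0

/-- `P`: the contraction algebra of `uv = xy(x²+y³)` computed from the relative Fukaya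
category model. -/
abbrev Palg (k : Type) [Field k] : Type := RingQuot (PRel k)

/-- Generators of `Q`: `0` is `E₁`, `1` is `E₂`, `2` is `a`, `3` is `c`, `4` is `ℓ`,
`5` is `m`. -/
inductive QRel (k : Type) [Field k] :
    FreeAlgebra k (Fin 6) → FreeAlgebra k (Fin 6) → Prop
  | total : QRel k (FreeAlgebra.ι k 0 + FreeAlgebra.ι k 1) 1
  | orth12 : QRel k (FreeAlgebra.ι k 0 * FreeAlgebra.ι k 1) 0
  | orth21 : QRel k (FreeAlgebra.ι k 1 * FreeAlgebra.ι k 0) 0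
  | idem1 : QRel k (FreeAlgebra.ι k 0 * FreeAlgebra.ι k 0) (FreeAlgebra.ι k 0)
  | idem2 : QRel k (FreeAlgebra.ι k 1 * FreeAlgebra.ι k 1) (FreeAlgebra.ι k 1)
  | sandM : QRel k (FreeAlgebra.ι k 0 * FreeAlgebra.ι k 5 * FreeAlgebra.ι k 0)
      (FreeAlgebra.ι k 5)
  | sandL : QRel k (FreeAlgebra.ι k 1 * FreeAlgebra.ι k 4 * FreeAlgebra.ι k 1)
      (FreeAlgebra.ι k 4)
  | sandA : QRel k (FreeAlgebra.ι k 1 * FreeAlgebra.ι k 2 * FreeAlgebra.ι k 0)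
      (FreeAlgebra.ι k 2)
  | sandC : QRel k (FreeAlgebra.ι k 0 * FreeAlgebra.ι k 3 * FreeAlgebra.ι k 1)
      (FreeAlgebra.ι k 3)
  | relL2 : QRel k (FreeAlgebra.ι k 4 * FreeAlgebra.ι k 4)
      (FreeAlgebra.ι k 2 * FreeAlgebra.ι k 3)
  | relM3 : QRel k (FreeAlgebra.ι k 5 * FreeAlgebra.ι k 5 * FreeAlgebra.ι k 5)
      (FreeAlgebra.ι k 3 * FreeAlgebra.ι k 2)
  | relLA : QRel k (FreeAlgebra.ι k 4 * FreeAlgebra.ι k 2) 0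
  | relAM : QRel k (FreeAlgebra.ι k 2 * FreeAlgebra.ι k 5) 0
  | relCL : QRel k (FreeAlgebra.ι k 3 * FreeAlgebra.ι k 4) 0
  | relMC : QRel k (FreeAlgebra.ι k 5 * FreeAlgebra.ι k 3) 0

/-- `Q`: August's presentation of the contraction algebra `B_con`. -/
abbrev Qalg (k : Type) [Field k] : Type := RingQuot (QRel k)

def mkP (k : Type) [Field k] (g : Fin 6) : Palg k :=
  RingQuot.mkAlgHom k (PRel k) (FreeAlgebra.ι k g)

def mkQ (k : Type) [Field k] (g : Fin 6) : Qalg k :=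
  RingQuot.mkAlgHom k (QRel k) (FreeAlgebra.ι k g)

/-!
Since `X E₁ = 0` and `Y E₂ = 0`, the central elements of `P` satisfy `X = X E₂` and `Y = Y E₁`, so
they are loops at the two vertices, like `ℓ` and `m`. Every generator then lies in a single Peirce
component `Eᵢ P Eⱼ`. A loop and an arrow compose to zero in one order for that reason alone, so the
loop commutes with the arrow exactly when the other product vanishes as well, which is one of the
relations `ℓa = am = cℓ = mc = 0`. Hence the two lists of relations are equivalent for families of
elements of any semiring, up to renaming the generators.
-/

universe u

section Presentations

variable {k : Type u} {ι κ A : Type*} [CommSemiring k] [Semiring A] [Algebra k A]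

/-- The family `g` satisfies the relations `r` between noncommutative polynomials in variables
indexed by `ι`; such families are the homomorphisms from the algebra presented by `r`. -/
def Satisfies (r : FreeAlgebra k ι → FreeAlgebra k ι → Prop) (g : ι → A) : Prop :=
  ∀ ⦃p q⦄, r p q → FreeAlgebra.lift k g p = FreeAlgebra.lift k g q

/-- The tautological generators of the algebra presented by `r`. -/
def presentedGen (r : FreeAlgebra k ι → FreeAlgebra k ι → Prop) (i : ι) : RingQuot r :=
  RingQuot.mkAlgHom k r (FreeAlgebra.ι k i)

variable {r : FreeAlgebra k ι → FreeAlgebra k ι → Prop}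
  {s : FreeAlgebra k κ → FreeAlgebra k κ → Prop}

theorem lift_presentedGen : FreeAlgebra.lift k (presentedGen r) = RingQuot.mkAlgHom k r :=
  FreeAlgebra.lift_comp_ι _

theorem satisfies_presentedGen : Satisfies r (presentedGen r) := fun _ _ h ↦ by
  simpa only [lift_presentedGen] using RingQuot.mkAlgHom_rel k h

/-- The homomorphism from the algebra presented by `r` that sends the generators to a family
satisfying `r`. -/
def Satisfies.lift {g : ι → A} (h : Satisfies r g) : RingQuot r →ₐ[k] A :=
  RingQuot.liftAlgHom k ⟨FreeAlgebra.lift k g, fun _ _ hpq ↦ h hpq⟩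

@[simp]
theorem Satisfies.lift_presentedGen {g : ι → A} (h : Satisfies r g) (i : ι) :
    h.lift (presentedGen r i) = g i := by
  rw [Satisfies.lift, presentedGen, RingQuot.liftAlgHom_mkAlgHom_apply, FreeAlgebra.lift_ι_apply]

theorem presented_algHom_ext {φ ψ : RingQuot r →ₐ[k] A}
    (h : ∀ i, φ (presentedGen r i) = ψ (presentedGen r i)) : φ = ψ :=
  RingQuot.ringQuot_ext' k φ ψ (FreeAlgebra.hom_ext (funext h))

/-- The isomorphism between two presented algebras that renames the generators along `σ`. -/
def presentedEquiv (σ : κ ≃ ι) (hs : Satisfies s (presentedGen r ∘ σ))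
    (hr : Satisfies r (presentedGen s ∘ σ.symm)) : RingQuot s ≃ₐ[k] RingQuot r :=
  AlgEquiv.ofAlgHom hs.lift hr.lift (presented_algHom_ext fun i ↦ by simp)
    (presented_algHom_ext fun i ↦ by simp)

theorem presentedEquiv_presentedGen (σ : κ ≃ ι) (hs : Satisfies s (presentedGen r ∘ σ))
    (hr : Satisfies r (presentedGen s ∘ σ.symm)) (i : κ) :
    presentedEquiv σ hs hr (presentedGen s i) = presentedGen r (σ i) :=
  hs.lift_presentedGen i

end Presentations

/-- The element `a` lies in the Peirce component `e R f`, for idempotents `e` and `f`. -/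
def IsPeirce {R : Type*} [Mul R] (e f a : R) : Prop :=
  e * a * f = a

namespace IsPeirce

theorem of_isIdempotentElem {R : Type*} [Mul R] {e : R} (he : IsIdempotentElem e) :
    IsPeirce e e e := by
  rw [IsPeirce, he.eq, he.eq]

section Semigroup

variable {R : Type*} [Semigroup R] {e f a : R}

theorem mul_left_eq (ha : IsPeirce e f a) (he : IsIdempotentElem e) : e * a = a :=
  calc e * a = e * e * a * f := by simp only [mul_assoc, ← ha.symm]
    _ = a := by rw [he.eq, ha]

theorem mul_right_eq (ha : IsPeirce e f a) (hf : IsIdempotentElem f) : a * f = a :=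
  calc a * f = e * a * (f * f) := by rw [← mul_assoc, ha]
    _ = a := by rw [hf.eq, ha]

end Semigroup

theorem mul_eq_zero {R : Type*} [SemigroupWithZero R] {e f e' f' a b : R}
    (ha : IsPeirce e f a) (hb : IsPeirce e' f' b) (h : f * e' = 0) : a * b = 0 :=
  calc a * b = (e * a * f) * (e' * b * f') := by rw [ha, hb]
    _ = e * a * (f * e') * (b * f') := by simp only [mul_assoc]
    _ = 0 := by rw [h, mul_zero, zero_mul]

end IsPeirce

section Relations

variable {R : Type*} [Semiring R]

theorem completeOrthogonalIdempotents_pair_symm {e₁ e₂ : R}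
    (h : CompleteOrthogonalIdempotents ![e₁, e₂]) : CompleteOrthogonalIdempotents ![e₂, e₁] := by
  obtain ⟨h₁₂, h₂₁, hsum⟩ := CompleteOrthogonalIdempotents.pair_iff'ₛ.mp h
  exact CompleteOrthogonalIdempotents.pair_iff'ₛ.mpr ⟨h₂₁, h₁₂, add_comm e₁ e₂ ▸ hsum⟩

theorem pow_add_pow_mul {x y e : R} {p q : ℕ} (hp : p ≠ 0) (hq : q ≠ 0) (hx : x * e = x)
    (hy : y * e = 0) : (x ^ p + y ^ q) * e = x ^ p := by
  obtain ⟨m, rfl⟩ := Nat.exists_eq_succ_of_ne_zero hp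
  obtain ⟨n, rfl⟩ := Nat.exists_eq_succ_of_ne_zero hq
  rw [add_mul, pow_succ, pow_succ, mul_assoc, mul_assoc, hx, hy, mul_zero, add_zero]

/-- The relations of `P` for `uv = xy(x^p + y^q)`, imposed on elements of a semiring; the relations
between `E₁` and `E₂` alone are bundled in `idempotents`. -/
structure CentralRelations (p q : ℕ) (x y e₁ e₂ a b : R) : Prop where
  idempotents : CompleteOrthogonalIdempotents ![e₁, e₂]
  commute_x : ∀ z ∈ ({x, y, e₁, e₂, a, b} : Set R), Commute x z
  commute_y : ∀ z ∈ ({x, y, e₁, e₂, a, b} : Set R), Commute y z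
  isPeirce_a : IsPeirce e₁ e₂ a
  isPeirce_b : IsPeirce e₂ e₁ b
  a_mul_b : a * b = (x ^ p + y ^ q) * e₁
  b_mul_a : b * a = (x ^ p + y ^ q) * e₂
  x_mul_e₁ : x * e₁ = 0
  y_mul_e₂ : y * e₂ = 0

/-- The relations of `Q` for `uv = xy(x^p + y^q)`, imposed on elements of a semiring; the relations
between `E₁` and `E₂` alone are bundled in `idempotents`. -/
structure LoopRelations (p q : ℕ) (e₁ e₂ a c l m : R) : Prop where
  idempotents : CompleteOrthogonalIdempotents ![e₁, e₂]
  isPeirce_m : IsPeirce e₁ e₁ m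
  isPeirce_l : IsPeirce e₂ e₂ l
  isPeirce_a : IsPeirce e₂ e₁ a
  isPeirce_c : IsPeirce e₁ e₂ c
  l_pow : l ^ p = a * c
  m_pow : m ^ q = c * a
  l_mul_a : l * a = 0
  a_mul_m : a * m = 0
  c_mul_l : c * l = 0
  m_mul_c : m * c = 0

variable {p q : ℕ}

namespace CentralRelations

variable {x y e₁ e₂ a b : R}

theorem symm (h : CentralRelations p q x y e₁ e₂ a b) : CentralRelations q p y x e₂ e₁ b a where
  idempotents := completeOrthogonalIdempotents_pair_symm h.idempotents
  commute_x z hz := h.commute_y z (by grind)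
  commute_y z hz := h.commute_x z (by grind)
  isPeirce_a := h.isPeirce_b
  isPeirce_b := h.isPeirce_a
  a_mul_b := by rw [h.b_mul_a, add_comm]
  b_mul_a := by rw [h.a_mul_b, add_comm]
  x_mul_e₁ := h.y_mul_e₂
  y_mul_e₂ := h.x_mul_e₁

theorem x_mul_e₂ (h : CentralRelations p q x y e₁ e₂ a b) : x * e₂ = x := by
  have hsum : e₁ + e₂ = 1 := (CompleteOrthogonalIdempotents.pair_iff'ₛ.mp h.idempotents).2.2
  calc x * e₂ = x * (e₁ + e₂) := by rw [mul_add, h.x_mul_e₁, zero_add]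
    _ = x := by rw [hsum, mul_one]

theorem isPeirce_x (h : CentralRelations p q x y e₁ e₂ a b) : IsPeirce e₂ e₂ x := by
  have hcomm : Commute x e₂ := h.commute_x e₂ (by simp)
  rw [IsPeirce, ← hcomm.eq, h.x_mul_e₂, h.x_mul_e₂]

theorem x_pow (h : CentralRelations p q x y e₁ e₂ a b) (hp : p ≠ 0) (hq : q ≠ 0) :
    x ^ p = b * a := by
  rw [h.b_mul_a, pow_add_pow_mul hp hq h.x_mul_e₂ h.y_mul_e₂]

theorem x_mul_b (h : CentralRelations p q x y e₁ e₂ a b) : x * b = 0 := by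
  have h₁₂ : e₁ * e₂ = 0 := (CompleteOrthogonalIdempotents.pair_iff'ₛ.mp h.idempotents).1
  rw [(h.commute_x b (by simp)).eq, h.isPeirce_b.mul_eq_zero h.isPeirce_x h₁₂]

theorem a_mul_x (h : CentralRelations p q x y e₁ e₂ a b) : a * x = 0 := by
  have h₂₁ : e₂ * e₁ = 0 := (CompleteOrthogonalIdempotents.pair_iff'ₛ.mp h.idempotents).2.1
  rw [← (h.commute_x a (by simp)).eq, h.isPeirce_x.mul_eq_zero h.isPeirce_a h₂₁]

theorem loopRelations (h : CentralRelations p q x y e₁ e₂ a b) (hp : p ≠ 0) (hq : q ≠ 0) :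
    LoopRelations p q e₁ e₂ b a x y where
  idempotents := h.idempotents
  isPeirce_m := h.symm.isPeirce_x
  isPeirce_l := h.isPeirce_x
  isPeirce_a := h.isPeirce_b
  isPeirce_c := h.isPeirce_a
  l_pow := h.x_pow hp hq
  m_pow := h.symm.x_pow hq hp
  l_mul_a := h.x_mul_b
  a_mul_m := h.symm.a_mul_x
  c_mul_l := h.a_mul_x
  m_mul_c := h.symm.x_mul_b

end CentralRelations

namespace LoopRelations

variable {e₁ e₂ a c l m : R}

theorem symm (h : LoopRelations p q e₁ e₂ a c l m) : LoopRelations q p e₂ e₁ c a m l where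
  idempotents := completeOrthogonalIdempotents_pair_symm h.idempotents
  isPeirce_m := h.isPeirce_l
  isPeirce_l := h.isPeirce_m
  isPeirce_a := h.isPeirce_c
  isPeirce_c := h.isPeirce_a
  l_pow := h.m_pow
  m_pow := h.l_pow
  l_mul_a := h.m_mul_c
  a_mul_m := h.c_mul_l
  c_mul_l := h.a_mul_m
  m_mul_c := h.l_mul_a

theorem l_mul_e₁ (h : LoopRelations p q e₁ e₂ a c l m) : l * e₁ = 0 :=
  h.isPeirce_l.mul_eq_zero (.of_isIdempotentElem (h.idempotents.idem 0))
    (CompleteOrthogonalIdempotents.pair_iff'ₛ.mp h.idempotents).2.1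

theorem commute_l (h : LoopRelations p q e₁ e₂ a c l m) :
    ∀ z ∈ ({l, m, e₁, e₂, c, a} : Set R), Commute l z := by
  obtain ⟨h₁₂, h₂₁, -⟩ := CompleteOrthogonalIdempotents.pair_iff'ₛ.mp h.idempotents
  have he₁ : IsPeirce e₁ e₁ e₁ := .of_isIdempotentElem (h.idempotents.idem 0)
  have he₂ : IsIdempotentElem e₂ := h.idempotents.idem 1
  rintro z (rfl | rfl | rfl | rfl | rfl | rfl)
  · exact Commute.refl z
  · exact (h.isPeirce_l.mul_eq_zero h.isPeirce_m h₂₁).trans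
      (h.isPeirce_m.mul_eq_zero h.isPeirce_l h₁₂).symm
  · exact h.l_mul_e₁.trans (he₁.mul_eq_zero h.isPeirce_l h₁₂).symm
  · exact (h.isPeirce_l.mul_right_eq he₂).trans (h.isPeirce_l.mul_left_eq he₂).symm
  · exact (h.isPeirce_l.mul_eq_zero h.isPeirce_c h₂₁).trans h.c_mul_l.symm
  · exact h.l_mul_a.trans (h.isPeirce_a.mul_eq_zero h.isPeirce_l h₁₂).symm

theorem a_mul_c (h : LoopRelations p q e₁ e₂ a c l m) (hp : p ≠ 0) (hq : q ≠ 0) :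
    a * c = (l ^ p + m ^ q) * e₂ := by
  have hl : l * e₂ = l := h.isPeirce_l.mul_right_eq (h.idempotents.idem 1)
  rw [pow_add_pow_mul hp hq hl h.symm.l_mul_e₁, h.l_pow]

theorem centralRelations (h : LoopRelations p q e₁ e₂ a c l m) (hp : p ≠ 0) (hq : q ≠ 0) :
    CentralRelations p q l m e₁ e₂ c a where
  idempotents := h.idempotents
  commute_x := h.commute_l
  commute_y z hz := h.symm.commute_l z (by grind)
  isPeirce_a := h.isPeirce_c
  isPeirce_b := h.isPeirce_a
  a_mul_b := by rw [h.symm.a_mul_c hq hp, add_comm]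
  b_mul_a := h.a_mul_c hp hq
  x_mul_e₁ := h.l_mul_e₁
  y_mul_e₂ := h.symm.l_mul_e₁

end LoopRelations

end Relations

theorem satisfies_PRel_iff {k : Type} [Field k] {A : Type*} [Semiring A] [Algebra k A]
    (g : Fin 6 → A) :
    Satisfies (PRel k) g ↔ CentralRelations 2 3 (g 0) (g 1) (g 2) (g 3) (g 4) (g 5) := by
  constructor
  · intro h
    exact
      { idempotents := CompleteOrthogonalIdempotents.pair_iff'ₛ.mpr
          ⟨by simpa using h .orth12, by simpa using h .orth21, by simpa using h .total⟩
        commute_x := by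
          have hX (i : Fin 6) : Commute (g 0) (g i) := by simpa [commute_iff_eq] using h (.centX i)
          rintro z (rfl | rfl | rfl | rfl | rfl | rfl) <;> exact hX _
        commute_y := by
          have hY (i : Fin 6) : Commute (g 1) (g i) := by simpa [commute_iff_eq] using h (.centY i)
          rintro z (rfl | rfl | rfl | rfl | rfl | rfl) <;> exact hY _
        isPeirce_a := by simpa [IsPeirce] using h .sandA
        isPeirce_b := by simpa [IsPeirce] using h .sandB
        a_mul_b := by simpa using h .relAB
        b_mul_a := by simpa using h .relBA
        x_mul_e₁ := by simpa using h .relXE1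
        y_mul_e₂ := by simpa using h .relYE2 }
  · intro h u v huv
    obtain ⟨h₁₂, h₂₁, hsum⟩ := CompleteOrthogonalIdempotents.pair_iff'ₛ.mp h.idempotents
    cases huv with
    | centX i => simpa using (h.commute_x (g i) (by fin_cases i <;> simp)).eq
    | centY i => simpa using (h.commute_y (g i) (by fin_cases i <;> simp)).eq
    | total => simpa using hsum
    | orth12 => simpa using h₁₂
    | orth21 => simpa using h₂₁
    | idem1 => simpa using (h.idempotents.idem 0).eq
    | idem2 => simpa using (h.idempotents.idem 1).eq
    | sandA => simpa [IsPeirce] using h.isPeirce_a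
    | sandB => simpa [IsPeirce] using h.isPeirce_b
    | relAB => simpa using h.a_mul_b
    | relBA => simpa using h.b_mul_a
    | relXE1 => simpa using h.x_mul_e₁
    | relYE2 => simpa using h.y_mul_e₂

theorem satisfies_QRel_iff {k : Type} [Field k] {A : Type*} [Semiring A] [Algebra k A]
    (g : Fin 6 → A) :
    Satisfies (QRel k) g ↔ LoopRelations 2 3 (g 0) (g 1) (g 2) (g 3) (g 4) (g 5) := by
  constructor
  · intro h
    exact
      { idempotents := CompleteOrthogonalIdempotents.pair_iff'ₛ.mpr
          ⟨by simpa using h .orth12, by simpa using h .orth21, by simpa using h .total⟩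
        isPeirce_m := by simpa [IsPeirce] using h .sandM
        isPeirce_l := by simpa [IsPeirce] using h .sandL
        isPeirce_a := by simpa [IsPeirce] using h .sandA
        isPeirce_c := by simpa [IsPeirce] using h .sandC
        l_pow := by simpa [pow_succ] using h .relL2
        m_pow := by simpa [pow_succ] using h .relM3
        l_mul_a := by simpa using h .relLA
        a_mul_m := by simpa using h .relAM
        c_mul_l := by simpa using h .relCL
        m_mul_c := by simpa using h .relMC }
  · intro h u v huv
    obtain ⟨h₁₂, h₂₁, hsum⟩ := CompleteOrthogonalIdempotents.pair_iff'ₛ.mp h.idempotents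
    cases huv with
    | total => simpa using hsum
    | orth12 => simpa using h₁₂
    | orth21 => simpa using h₂₁
    | idem1 => simpa using (h.idempotents.idem 0).eq
    | idem2 => simpa using (h.idempotents.idem 1).eq
    | sandM => simpa [IsPeirce] using h.isPeirce_m
    | sandL => simpa [IsPeirce] using h.isPeirce_l
    | sandA => simpa [IsPeirce] using h.isPeirce_a
    | sandC => simpa [IsPeirce] using h.isPeirce_c
    | relL2 => simpa [pow_succ] using h.l_pow
    | relM3 => simpa [pow_succ] using h.m_pow
    | relLA => simpa using h.l_mul_a
    | relAM => simpa using h.a_mul_m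
    | relCL => simpa using h.c_mul_l
    | relMC => simpa using h.m_mul_c

/-- The bijection from the generators `E₁, E₂, a, c, ℓ, m` of `Q` to the generators
`E₁, E₂, B, A, X, Y` of `P`, in the numberings of `QRel` and `PRel`. -/
def generatorEquiv : Fin 6 ≃ Fin 6 where
  toFun := ![2, 3, 5, 4, 0, 1]
  invFun := ![4, 5, 0, 1, 3, 2]
  left_inv := by decide
  right_inv := by decide

/-- The relations of `P` and `Q` enter through the families that satisfy them, so `r` and `s` may be
any lists of relations with the same consequences. -/
theorem stmt14_general {k : Type u} [CommSemiring k] {p q : ℕ} (hp : p ≠ 0) (hq : q ≠ 0)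
    {r s : FreeAlgebra k (Fin 6) → FreeAlgebra k (Fin 6) → Prop}
    (hr : ∀ {A : Type u} [Semiring A] [Algebra k A] (g : Fin 6 → A),
      Satisfies r g ↔ CentralRelations p q (g 0) (g 1) (g 2) (g 3) (g 4) (g 5))
    (hs : ∀ {A : Type u} [Semiring A] [Algebra k A] (g : Fin 6 → A),
      Satisfies s g ↔ LoopRelations p q (g 0) (g 1) (g 2) (g 3) (g 4) (g 5)) :
    ∃ φ : RingQuot s ≃ₐ[k] RingQuot r,
      φ (presentedGen s 0) = presentedGen r 2 ∧
      φ (presentedGen s 1) = presentedGen r 3 ∧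
      φ (presentedGen s 2) = presentedGen r 5 ∧
      φ (presentedGen s 3) = presentedGen r 4 ∧
      φ (presentedGen s 4) = presentedGen r 0 * presentedGen r 3 ∧
      φ (presentedGen s 5) = presentedGen r 1 * presentedGen r 2 := by
  have hP := (hr _).mp (satisfies_presentedGen (r := r))
  have hQ := (hs _).mp (satisfies_presentedGen (r := s))
  let φ : RingQuot s ≃ₐ[k] RingQuot r := presentedEquiv generatorEquiv
    ((hs _).mpr (hP.loopRelations hp hq)) ((hr _).mpr (hQ.centralRelations hp hq))
  have hφ (i : Fin 6) : φ (presentedGen s i) = presentedGen r (generatorEquiv i) :=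
    presentedEquiv_presentedGen _ _ _ i
  exact ⟨φ, hφ 0, hφ 1, hφ 2, hφ 3, (hφ 4).trans hP.x_mul_e₂.symm,
    (hφ 5).trans hP.symm.x_mul_e₂.symm⟩

/-- There is a `k`-algebra isomorphism `Q → P` determined by `E₁ ↦ E₁`, `E₂ ↦ E₂`,
`a ↦ B`, `c ↦ A`, `ℓ ↦ X·E₂`, `m ↦ Y·E₁`. -/
theorem stmt14 (k : Type) [Field k] :
    ∃ φ : Qalg k ≃ₐ[k] Palg k,
      φ (mkQ k 0) = mkP k 2 ∧
      φ (mkQ k 1) = mkP k 3 ∧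
      φ (mkQ k 2) = mkP k 5 ∧
      φ (mkQ k 3) = mkP k 4 ∧
      φ (mkQ k 4) = mkP k 0 * mkP k 3 ∧
      φ (mkQ k 5) = mkP k 1 * mkP k 2 :=
  stmt14_general two_ne_zero three_ne_zero satisfies_PRel_iff satisfies_QRel_iff
end
end
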